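/- arXiv:2011.13639 — 4 statements merged into one kernel-verified Lean document; each statement's English description precedes it below -/
import Mathlib

section
/- Let δ ∈ ℝ. Then (𝒱(•,δ), d_δ) is a complete metric space, and 𝒱_K(•,δ) is dense in it; that is, 𝒱(•,δ) is the completion of 𝒱_K(•,δ) under the metric d_δ. -/
open Filter Topology TopologicalSpace Set Polynomial

noncomputable section

namespace PaperPCZar

variable {K : Type*} [Field K]

/-- `expNeg γ = e^{-γ}` for `γ ∈ ℝ ∪ {∞}`, with `e^{-∞} = 0`. -/
def expNeg (γ : WithTop ℝ) : ℝ := WithTop.recTopCoe 0 (fun r => Real.exp (-r)) γ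

/-- `v` is a rank-one (i.e. nontrivial, real-valued) valuation. -/
def IsRankOne (v : AddValuation K (WithTop ℝ)) : Prop := ∃ x : K, v x ≠ 0 ∧ v x ≠ ⊤

/-- The value group `Γ_v` of `v`, as a subset of `ℝ`. -/
def valueGroup (v : AddValuation K (WithTop ℝ)) : Set ℝ := {r : ℝ | ∃ x : K, v x = (r : WithTop ℝ)}

/-- `ℚΓ_v = {q·γ : q ∈ ℚ, γ ∈ Γ_v}`, the divisible hull of the value group inside `ℝ`. -/
def QGamma (v : AddValuation K (WithTop ℝ)) : Set ℝ :=
  {r : ℝ | ∃ (q : ℚ) (γ : ℝ), γ ∈ valueGroup v ∧ r = q * γ}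

/-- Order convergence of a sequence in `ℝ ∪ {∞}` to `γ`. -/
def OrdLim (f : ℕ → WithTop ℝ) (γ : WithTop ℝ) : Prop :=
  (∀ a : WithTop ℝ, a < γ → ∀ᶠ n in atTop, a < f n) ∧
  (∀ b : WithTop ℝ, γ < b → ∀ᶠ n in atTop, f n < b)

/-- `s` is a pseudo-convergent sequence with respect to `v`. -/
def IsPC (v : AddValuation K (WithTop ℝ)) (s : ℕ → K) : Prop :=
  ∀ n, v (s (n + 1) - s n) < v (s (n + 2) - s (n + 1))

/-- `s` is a pseudo-divergent sequence with respect to `v`. -/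
def IsPD (v : AddValuation K (WithTop ℝ)) (s : ℕ → K) : Prop :=
  ∀ n, v (s (n + 1) - s (n + 2)) < v (s n - s (n + 1))

/-- `s` is a pseudo-stationary sequence with respect to `v`. -/
def IsPS (v : AddValuation K (WithTop ℝ)) (s : ℕ → K) : Prop :=
  ∀ n m n' m' : ℕ, n ≠ m → n' ≠ m' → v (s n - s m) = v (s n' - s m')

/-- `δ ∈ ℝ ∪ {∞}` is the breadth of the sequence `s`, i.e. `δ = lim_n v(s_{n+1} - s_n)`. -/
def IsBreadth (v : AddValuation K (WithTop ℝ)) (s : ℕ → K) (δ : WithTop ℝ) : Prop :=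
  OrdLim (fun n => v (s (n + 1) - s n)) δ

/-- `α ∈ K` is a pseudo-limit of the pseudo-convergent sequence `s`. -/
def IsPCLimit (v : AddValuation K (WithTop ℝ)) (s : ℕ → K) (α : K) : Prop :=
  ∀ n, v (α - s n) < v (α - s (n + 1))

/-- `α ∈ K` is a pseudo-limit of the pseudo-divergent sequence `s`. -/
def IsPDLimit (v : AddValuation K (WithTop ℝ)) (s : ℕ → K) (α : K) : Prop :=
  ∀ n, v (α - s (n + 1)) < v (α - s n)

/-- `β ∈ K̄` is a pseudo-limit of `s ⊆ K` with respect to an extension `u` of `v`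
to the algebraic closure of `K`. -/
def IsPCLimitAC (u : AddValuation (AlgebraicClosure K) (WithTop ℝ)) (s : ℕ → K)
    (β : AlgebraicClosure K) : Prop :=
  ∀ n, u (β - algebraMap K (AlgebraicClosure K) (s n)) <
    u (β - algebraMap K (AlgebraicClosure K) (s (n + 1)))

/-- `s` is of transcendental type: for every polynomial `f`, `v(f(s_n))` eventually
stabilizes. -/
def IsTranscendentalType (v : AddValuation K (WithTop ℝ)) (s : ℕ → K) : Prop :=
  ∀ f : Polynomial K, ∃ N, ∀ n ≥ N, v (f.eval (s n)) = v (f.eval (s N))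

/-- The ultrametric distance `d(x,y) = e^{-v(x-y)}` on `K`. -/
def dK (v : AddValuation K (WithTop ℝ)) (x y : K) : ℝ := expNeg (v (x - y))

/-- The set `V_E = {φ ∈ K(X) : φ(s_n) ∈ V for all but finitely many n}`. -/
def VESet (v : AddValuation K (WithTop ℝ)) (s : ℕ → K) : Set (RatFunc K) :=
  {φ : RatFunc K | ∀ᶠ n in atTop, 0 ≤ v (RatFunc.eval (RingHom.id K) (s n) φ)}

/-- `Zar(K(X)|V)`: the valuation subrings of `K(X)` containing (the image of) `V`. -/
def ZarSet (v : AddValuation K (WithTop ℝ)) : Set (ValuationSubring (RatFunc K)) :=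
  {W | ∀ x : K, 0 ≤ v x → algebraMap K (RatFunc K) x ∈ W}

/-- `𝒱`: valuation subrings of `K(X)` of the form `V_E`, `E` pseudo-convergent. -/
def VV (v : AddValuation K (WithTop ℝ)) : Set (ValuationSubring (RatFunc K)) :=
  {W | ∃ s : ℕ → K, IsPC v s ∧ (W : Set (RatFunc K)) = VESet v s}

/-- `𝒱(•,δ)`: those `V_E` with `E` pseudo-convergent of breadth `δ`. -/
def VVδ (v : AddValuation K (WithTop ℝ)) (δ : WithTop ℝ) : Set (ValuationSubring (RatFunc K)) :=
  {W | ∃ s : ℕ → K, IsPC v s ∧ IsBreadth v s δ ∧ (W : Set (RatFunc K)) = VESet v s}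

/-- `𝒱_K(•,δ)`: those `V_E` with `E` pseudo-convergent of breadth `δ` having a
pseudo-limit in `K`. -/
def VVKδ (v : AddValuation K (WithTop ℝ)) (δ : WithTop ℝ) : Set (ValuationSubring (RatFunc K)) :=
  {W | ∃ s : ℕ → K, IsPC v s ∧ IsBreadth v s δ ∧ (∃ α : K, IsPCLimit v s α) ∧
    (W : Set (RatFunc K)) = VESet v s}

/-- `𝒱(β,•)`: those `V_E` with `E` pseudo-convergent having `β ∈ K̄` as a pseudo-limit
with respect to `u`. -/
def VVβ (v : AddValuation K (WithTop ℝ)) (u : AddValuation (AlgebraicClosure K) (WithTop ℝ))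
    (β : AlgebraicClosure K) : Set (ValuationSubring (RatFunc K)) :=
  {W | ∃ s : ℕ → K, IsPC v s ∧ IsPCLimitAC u s β ∧ (W : Set (RatFunc K)) = VESet v s}

/-- `𝒱(β,•)` for a pseudo-limit `β ∈ K`. -/
def VVβK (v : AddValuation K (WithTop ℝ)) (β : K) : Set (ValuationSubring (RatFunc K)) :=
  {W | ∃ s : ℕ → K, IsPC v s ∧ IsPCLimit v s β ∧ (W : Set (RatFunc K)) = VESet v s}

/-- `𝒱_div`: those `V_E` with `E` pseudo-divergent. -/
def VVdiv (v : AddValuation K (WithTop ℝ)) : Set (ValuationSubring (RatFunc K)) :=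
  {W | ∃ s : ℕ → K, IsPD v s ∧ (W : Set (RatFunc K)) = VESet v s}

/-- `𝒱_div(•,δ)`: those `V_E` with `E` pseudo-divergent of breadth `δ`. -/
def VVdivδ (v : AddValuation K (WithTop ℝ)) (δ : WithTop ℝ) : Set (ValuationSubring (RatFunc K)) :=
  {W | ∃ s : ℕ → K, IsPD v s ∧ IsBreadth v s δ ∧ (W : Set (RatFunc K)) = VESet v s}

/-- `𝒱_div(β,•)`: those `V_E` with `E` pseudo-divergent having `β ∈ K` as a pseudo-limit. -/
def VVdivβ (v : AddValuation K (WithTop ℝ)) (β : K) : Set (ValuationSubring (RatFunc K)) :=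
  {W | ∃ s : ℕ → K, IsPD v s ∧ IsPDLimit v s β ∧ (W : Set (RatFunc K)) = VESet v s}

/-- `𝒱_stat(•,δ)`: those `V_E` with `E` pseudo-stationary of breadth `δ`. -/
def VVstatδ (v : AddValuation K (WithTop ℝ)) (δ : WithTop ℝ) :
    Set (ValuationSubring (RatFunc K)) :=
  {W | ∃ s : ℕ → K, (∀ n m : ℕ, n ≠ m → v (s n - s m) = δ) ∧
    (W : Set (RatFunc K)) = VESet v s}

/-- `𝒱_stat(β,•)`: those `V_E` with `E` pseudo-stationary having `β` as a pseudo-limit. -/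
def VVstatβ (v : AddValuation K (WithTop ℝ)) (β : K) : Set (ValuationSubring (RatFunc K)) :=
  {W | ∃ (s : ℕ → K) (δ : WithTop ℝ), (∀ n m : ℕ, n ≠ m → v (s n - s m) = δ) ∧
    (∀ n, δ ≤ v (β - s n)) ∧ (W : Set (RatFunc K)) = VESet v s}

/-- The Zariski topology on the valuation subrings of a field `L`, generated by the
sets `B(φ) = {W : φ ∈ W}`. -/
def zarTop (L : Type*) [Field L] : TopologicalSpace (ValuationSubring L) :=
  generateFrom {U | ∃ φ : L, U = {W : ValuationSubring L | φ ∈ W}}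

/-- The constructible topology on the valuation subrings of a field `L`: the coarsest
topology in which all finite intersections `B(φ₁) ∩ ⋯ ∩ B(φ_k)` are open and closed. -/
def consTop (L : Type*) [Field L] : TopologicalSpace (ValuationSubring L) :=
  generateFrom {U | ∃ T : Finset L, U = {W : ValuationSubring L | ∀ φ ∈ T, φ ∈ W} ∨
    U = {W : ValuationSubring L | ∀ φ ∈ T, φ ∈ W}ᶜ}

/-- The subspace Zariski topology on a set of valuation subrings. -/
def zarSub {L : Type*} [Field L] (S : Set (ValuationSubring L)) : TopologicalSpace ↥S :=
  (zarTop L).induced Subtype.val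

/-- The subspace constructible topology on a set of valuation subrings. -/
def consSub {L : Type*} [Field L] (S : Set (ValuationSubring L)) : TopologicalSpace ↥S :=
  (consTop L).induced Subtype.val

/-- `d` is a metric on `X` inducing the topology `t`. -/
def MetrizedBy {X : Type*} (t : TopologicalSpace X) (d : X → X → ℝ) : Prop :=
  (∀ x y, d x y = d y x) ∧ (∀ x y, d x y = 0 ↔ x = y) ∧
  (∀ x y z, d x z ≤ d x y + d y z) ∧
  t = generateFrom {U : Set X | ∃ (x : X) (ε : ℝ), 0 < ε ∧ U = {y | d x y < ε}}

/-- The topology `t` is metrizable. -/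
def IsMetrizable {X : Type*} (t : TopologicalSpace X) : Prop := ∃ d, MetrizedBy t d

/-- The topology `t` is induced by an ultrametric. -/
def IsUltrametrizable {X : Type*} (t : TopologicalSpace X) : Prop :=
  ∃ d, MetrizedBy t d ∧ ∀ x y z, d x z ≤ max (d x y) (d y z)

/-- `dd` computes the distance `d_δ` on `𝒱(•,δ)`:
`d_δ(V_E, V_F) = lim_n max (d(s_n,t_n) - e^{-δ}) 0`. -/
def IsDistδ (v : AddValuation K (WithTop ℝ)) (δ : WithTop ℝ)
    (dd : ValuationSubring (RatFunc K) → ValuationSubring (RatFunc K) → ℝ) : Prop :=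
  ∀ (W W' : ValuationSubring (RatFunc K)) (s t : ℕ → K),
    IsPC v s → IsBreadth v s δ → (W : Set (RatFunc K)) = VESet v s →
    IsPC v t → IsBreadth v t δ → (W' : Set (RatFunc K)) = VESet v t →
    Tendsto (fun n => max (dK v (s n) (t n) - expNeg δ) 0) atTop (𝓝 (dd W W'))

/-- The `Λ`-upper limit topology on the interval `(-∞, b] ⊆ ℝ ∪ {∞}`, generated by the
half-open intervals `(α, λ]` with `λ ∈ Λ ∪ {∞}`. -/
def upperTopWT (b : WithTop ℝ) (Λ : Set ℝ) : TopologicalSpace {γ : WithTop ℝ // γ ≤ b} :=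
  generateFrom {U | ∃ α lam : WithTop ℝ, α ≤ b ∧
    (lam = ⊤ ∨ ∃ r ∈ Λ, lam = (r : WithTop ℝ)) ∧
    U = {γ : {γ : WithTop ℝ // γ ≤ b} | α < (γ : WithTop ℝ) ∧ (γ : WithTop ℝ) ≤ lam}}

/-- The `Λ`-upper limit topology on `(-∞, +∞] = ℝ ∪ {∞}`. -/
def upperTopAll (Λ : Set ℝ) : TopologicalSpace (WithTop ℝ) :=
  generateFrom {U | ∃ α lam : WithTop ℝ,
    (lam = ⊤ ∨ ∃ r ∈ Λ, lam = (r : WithTop ℝ)) ∧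
    U = {γ : WithTop ℝ | α < γ ∧ γ ≤ lam}}

/-- The `Λ`-upper limit topology on an interval `(a, b]` of `ℝ ∪ {±∞}`. -/
def upperTopE (a b : EReal) (Λ : Set ℝ) : TopologicalSpace {x : EReal // a < x ∧ x ≤ b} :=
  generateFrom {U | ∃ α lam : EReal, (a < α ∧ α ≤ b) ∧
    (lam = ⊤ ∨ ∃ r ∈ Λ, lam = (r : EReal)) ∧
    U = {x : {x : EReal // a < x ∧ x ≤ b} | α < (x : EReal) ∧ (x : EReal) ≤ lam}}


/-- `𝒲`: the valuation domains of the valuations `w_E : φ ↦ lim_n v(φ(s_n))`, as `E`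
ranges over the pseudo-convergent sequences for which `w_E` is a valuation. -/
def WW (v : AddValuation K (WithTop ℝ)) : Set (ValuationSubring (RatFunc K)) :=
  {W | ∃ (s : ℕ → K) (w : AddValuation (RatFunc K) (WithTop ℝ)), IsPC v s ∧
    (∀ φ : RatFunc K, OrdLim (fun n => v (RatFunc.eval (RingHom.id K) (s n) φ)) (w φ)) ∧
    (W : Set (RatFunc K)) = {φ : RatFunc K | 0 ≤ w φ}}

theorem pc_real (v : AddValuation K (WithTop ℝ)) (s : ℕ → K) (hs : IsPC v s) :
    ∃ γ : ℕ → ℝ, StrictMono γ ∧ ∀ n m, n < m → v (s m - s n) = (γ n : WithTop ℝ) := by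
  have h1 : ∀ n, ∃ r : ℝ, v (s (n+1) - s n) = (r : WithTop ℝ) := fun n => by
    obtain ⟨r, hr⟩ := WithTop.ne_top_iff_exists.1 (ne_top_of_lt (hs n))
    exact ⟨r, hr.symm⟩
  choose γ hγ using h1
  have hm : StrictMono γ := strictMono_nat_of_lt_succ fun n => by
    have := hs n
    rw [hγ n, hγ (n+1)] at this
    exact_mod_cast this
  refine ⟨γ, hm, ?_⟩
  intro n m h
  induction m, h using Nat.le_induction with
  | base => exact hγ n
  | succ m hnm ih =>
    have e : s (m+1) - s n = (s m - s n) + (s (m+1) - s m) := by ring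
    rw [e, AddValuation.map_add_eq_of_lt_left, ih]
    rw [ih, hγ m]
    exact_mod_cast hm hnm

theorem breadth_real (v : AddValuation K (WithTop ℝ)) (s : ℕ → K) (γ : ℕ → ℝ) (hm : StrictMono γ)
    (hγ : ∀ n m, n < m → v (s m - s n) = (γ n : WithTop ℝ)) (δ : ℝ)
    (hb : IsBreadth v s (δ : WithTop ℝ)) :
    (∀ n, γ n < δ) ∧ ∀ r < δ, ∃ N, ∀ n ≥ N, r < γ n := by
  have hb' : OrdLim (fun n => (γ n : WithTop ℝ)) δ := by
    have : (fun n => v (s (n+1) - s n)) = fun n => (γ n : WithTop ℝ) :=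
      funext fun n => hγ n (n+1) (Nat.lt_succ_self n)
    unfold IsBreadth at hb
    rwa [this] at hb
  constructor
  · intro n
    by_contra h
    push Not at h
    have h2 : δ < γ (n+1) := lt_of_le_of_lt h (hm (Nat.lt_succ_self n))
    obtain ⟨N, hN⟩ := eventually_atTop.1 (hb'.2 (γ (n+1)) (by exact_mod_cast h2))
    have := hN (max N (n+1)) (le_max_left _ _)
    have h3 : γ (max N (n+1)) < γ (n+1) := WithTop.coe_lt_coe.1 this
    exact absurd (hm.monotone (le_max_right N (n+1))) (not_le.2 h3)
  · intro r hr
    obtain ⟨N, hN⟩ := eventually_atTop.1 (hb'.1 r (by exact_mod_cast hr))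
    exact ⟨N, fun n hn => WithTop.coe_lt_coe.1 (hN n hn)⟩

theorem v_pow (v : AddValuation K (WithTop ℝ)) {x : K} {r : ℝ} (h : v x = (r : WithTop ℝ)) (i : ℕ) :
    v (x ^ i) = ((i * r : ℝ) : WithTop ℝ) := by
  induction i with
  | zero => simp
  | succ i ih =>
    rw [pow_succ, AddValuation.map_mul, ih, h, ← WithTop.coe_add]
    congr 1; push_cast; ring

theorem v_mul (v : AddValuation K (WithTop ℝ)) {x y : K} {a b : ℝ} (hx : v x = (a : WithTop ℝ))
    (hy : v y = (b : WithTop ℝ)) : v (x * y) = ((a + b : ℝ) : WithTop ℝ) := by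
  rw [AddValuation.map_mul, hx, hy, WithTop.coe_add]

theorem v_div (v : AddValuation K (WithTop ℝ)) {x y : K} {a b : ℝ} (hx : v x = (a : WithTop ℝ))
    (hy : v y = (b : WithTop ℝ)) : v (x / y) = ((a - b : ℝ) : WithTop ℝ) := by
  have hy0 : y ≠ 0 := by
    rintro rfl
    rw [AddValuation.map_zero] at hy
    exact WithTop.top_ne_coe hy
  have hx0 : x ≠ 0 := by
    rintro rfl
    rw [AddValuation.map_zero] at hx
    exact WithTop.top_ne_coe hx
  obtain ⟨r, hr⟩ := WithTop.ne_top_iff_exists.1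
    (fun h => (div_ne_zero hx0 hy0) ((AddValuation.top_iff v).1 h) : v (x / y) ≠ ⊤)
  have h := v_mul v hr.symm hy
  rw [div_mul_cancel₀ _ hy0, hx] at h
  have h' : a = r + b := by exact_mod_cast h
  rw [← hr, h']; simp

theorem lines (γ : ℕ → ℝ) (hm : StrictMono γ) (a b : ℝ) (hb : b ≠ 0) :
    (∀ᶠ n in atTop, a + b * γ n < 0) ∨ (∀ᶠ n in atTop, 0 < a + b * γ n) := by
  rcases lt_or_gt_of_ne hb with hb | hb
  · by_cases h : ∃ N, a + b * γ N ≤ 0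
    · obtain ⟨N, hN⟩ := h
      left
      filter_upwards [eventually_gt_atTop N] with n hn
      have := hm hn
      nlinarith
    · push Not at h
      right
      exact Eventually.of_forall h
  · by_cases h : ∃ N, 0 ≤ a + b * γ N
    · obtain ⟨N, hN⟩ := h
      right
      filter_upwards [eventually_gt_atTop N] with n hn
      have := hm hn
      nlinarith
    · push Not at h
      left
      exact Eventually.of_forall h

theorem unique_min (γ : ℕ → ℝ) (hm : StrictMono γ) (c : ℕ → ℝ) (S : Finset ℕ) (hS : S.Nonempty) :
    ∃ i₀ ∈ S, ∀ᶠ n in atTop, ∀ i ∈ S, i ≠ i₀ → c i₀ + i₀ * γ n < c i + i * γ n := by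
  induction hS using Finset.Nonempty.cons_induction with
  | singleton a => exact ⟨a, by simp, by simp⟩
  | cons a S ha hS ih =>
    obtain ⟨i₀, hi, h⟩ := ih
    have hne : ((i₀ : ℝ) - a) ≠ 0 := by
      rw [sub_ne_zero]
      intro h; apply ha
      have : i₀ = a := by exact_mod_cast h
      exact this ▸ hi
    rcases lines γ hm (c i₀ - c a) (i₀ - a) hne with h1 | h1
    · refine ⟨i₀, by simp [hi], ?_⟩
      filter_upwards [h, h1] with n hn hn1 i his hne
      rw [Finset.mem_cons] at his
      rcases his with rfl | his
      · linarith
      · exact hn i his hne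
    · refine ⟨a, by simp, ?_⟩
      filter_upwards [h, h1] with n hn hn1 i his hne
      rw [Finset.mem_cons] at his
      rcases his with rfl | his
      · exact absurd rfl hne
      · by_cases e : i = i₀
        · subst e; linarith
        · have := hn i his e
          linarith

theorem v_sum (v : AddValuation K (WithTop ℝ)) (S : Finset ℕ) (x : ℕ → K) (i₀ : ℕ) (hi : i₀ ∈ S)
    (r : ℝ) (hr : v (x i₀) = (r : WithTop ℝ))
    (h : ∀ i ∈ S, i ≠ i₀ → (r : WithTop ℝ) < v (x i)) : v (∑ i ∈ S, x i) = (r : WithTop ℝ) := by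
  rw [← Finset.add_sum_erase S x hi, AddValuation.map_add_eq_of_lt_left, hr]
  rw [hr]
  apply AddValuation.map_lt_sum v (WithTop.coe_ne_top)
  intro i hi
  rw [Finset.mem_erase] at hi
  exact h i hi.2 hi.1

/-- The difference of values of a polynomial all of whose Hasse derivatives are stable. -/
theorem taylor_diff (v : AddValuation K (WithTop ℝ)) (s : ℕ → K) (γ : ℕ → ℝ) (hm : StrictMono γ)
    (hγ : ∀ n m, n < m → v (s m - s n) = (γ n : WithTop ℝ)) (q : K[X]) (hq : 0 < q.natDegree)
    (hst : ∀ f : K[X], f ≠ 0 → f.natDegree < q.natDegree →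
      ∃ c : ℝ, ∀ᶠ n in atTop, v (f.eval (s n)) = (c : WithTop ℝ)) :
    ∃ (c : ℝ) (k : ℕ), 0 < k ∧ ∃ N, ∀ n ≥ N, ∀ m > n,
      v (q.eval (s m) - q.eval (s n)) = ((c + k * γ n : ℝ) : WithTop ℝ) := by
  classical
  set d := q.natDegree with hd
  let T := (Finset.Icc 1 d).filter (fun i => hasseDeriv i q ≠ 0)
  have hT : ∀ i ∈ T, ∃ c : ℝ, ∀ᶠ n in atTop, v ((hasseDeriv i q).eval (s n)) = (c : WithTop ℝ) := by
    intro i hi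
    simp only [T, Finset.mem_filter, Finset.mem_Icc] at hi
    apply hst _ hi.2
    have := natDegree_hasseDeriv_le q i
    omega
  have hq0 : q ≠ 0 := by
    rintro rfl; simp at hd; omega
  have hTne : T.Nonempty := by
    refine ⟨d, ?_⟩
    simp only [T, Finset.mem_filter, Finset.mem_Icc]
    refine ⟨⟨hq, le_rfl⟩, fun h => ?_⟩
    have h2 : (hasseDeriv d q).coeff 0 = 0 := by rw [h]; simp
    rw [hasseDeriv_coeff] at h2
    simp [hd] at h2
    exact hq0 h2
  choose! c hc using hT
  obtain ⟨k, hk, hmin⟩ := unique_min γ hm c T hTne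
  have hall : ∀ᶠ n in atTop, ∀ i ∈ T, v ((hasseDeriv i q).eval (s n)) = (c i : WithTop ℝ) :=
    (Filter.eventually_all_finset T).2 hc
  obtain ⟨N, hN⟩ := eventually_atTop.1 (hall.and hmin)
  refine ⟨c k, k, ?_, N, ?_⟩
  · simp only [T, Finset.mem_filter, Finset.mem_Icc] at hk; omega
  intro n hn m hmn
  obtain ⟨h1, h2⟩ := hN n hn
  have key : q.eval (s m) - q.eval (s n)
      = ∑ i ∈ T, (hasseDeriv i q).eval (s n) * (s m - s n) ^ i := by
    have e1 : q.eval (s m) = (taylor (s n) q).eval (s m - s n) := by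
      rw [taylor_eval]; congr 1; ring
    rw [e1, eval_eq_sum_range, natDegree_taylor, Finset.sum_range_succ', taylor_coeff_zero]
    simp only [pow_zero, mul_one, add_sub_cancel_right]
    have e2 : ∑ i ∈ T, (hasseDeriv i q).eval (s n) * (s m - s n) ^ i
        = ∑ i ∈ Finset.Icc 1 d, (hasseDeriv i q).eval (s n) * (s m - s n) ^ i := by
      apply Finset.sum_subset (Finset.filter_subset _ _)
      intro i hi hiT
      have : hasseDeriv i q = 0 := by
        by_contra h
        exact hiT (Finset.mem_filter.2 ⟨hi, h⟩)
      simp [this]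
    rw [e2, Finset.sum_bij (fun i _ => i + 1)]
    · intro i hi; simp at hi ⊢; omega
    · intro i _ j _ h; simpa using h
    · intro j hj
      rw [Finset.mem_Icc] at hj
      exact ⟨j - 1, by simp; omega, by omega⟩
    · intro i _
      rw [taylor_coeff]
  have hv : ∀ i ∈ T, v ((hasseDeriv i q).eval (s n) * (s m - s n) ^ i)
      = ((c i + i * γ n : ℝ) : WithTop ℝ) := fun i hi =>
    v_mul v (h1 i hi) (v_pow v (hγ n m hmn) i)
  rw [key]
  apply v_sum v T _ k hk _ (hv k hk)
  intro i hi hne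
  rw [hv i hi]
  exact_mod_cast h2 i hi hne

theorem linear_val (v : AddValuation K (WithTop ℝ)) (s : ℕ → K) (γ : ℕ → ℝ) (hm : StrictMono γ)
    (hγ : ∀ n m, n < m → v (s m - s n) = (γ n : WithTop ℝ)) (f : K[X]) (hf : f ≠ 0) :
    ∃ (c : ℝ) (k : ℕ), ∀ᶠ n in atTop, v (f.eval (s n)) = ((c + k * γ n : ℝ) : WithTop ℝ) := by
  classical
  by_cases hA : ∀ g : K[X], g ≠ 0 → ∃ c : ℝ, ∀ᶠ n in atTop, v (g.eval (s n)) = (c : WithTop ℝ)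
  · obtain ⟨c, hc⟩ := hA f hf
    exact ⟨c, 0, by simpa using hc⟩
  have hex : ∃ d : ℕ, ∃ q : K[X], q.natDegree = d ∧ q ≠ 0 ∧
      ¬ ∃ c : ℝ, ∀ᶠ n in atTop, v (q.eval (s n)) = (c : WithTop ℝ) := by
    push Not at hA
    obtain ⟨g, hg, h⟩ := hA
    exact ⟨_, g, rfl, hg, by push Not; exact h⟩
  obtain ⟨q, hqd, hq0, hqu⟩ := Nat.find_spec hex
  have hst : ∀ g : K[X], g ≠ 0 → g.natDegree < q.natDegree →
      ∃ c : ℝ, ∀ᶠ n in atTop, v (g.eval (s n)) = (c : WithTop ℝ) := by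
    intro g hg hlt
    rw [hqd] at hlt
    by_contra h
    exact Nat.find_min hex hlt ⟨g, rfl, hg, h⟩
  have hqpos : 0 < q.natDegree := by
    by_contra h
    apply hqu
    have h0 : q.natDegree = 0 := by omega
    rw [natDegree_eq_zero] at h0
    obtain ⟨x, rfl⟩ := h0
    have hx : x ≠ 0 := by rintro rfl; simp at hq0
    obtain ⟨r, hr⟩ := WithTop.ne_top_iff_exists.1
      (fun h => hx ((AddValuation.top_iff v).1 h) : v x ≠ ⊤)
    exact ⟨r, by simp [hr]⟩
  obtain ⟨c, k, hk, N, hN⟩ := taylor_diff v s γ hm hγ q hqpos hst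
  have hk' : (0 : ℝ) < k := by exact_mod_cast hk
  have hge : ∀ n ≥ N, ((c + k * γ n : ℝ) : WithTop ℝ) ≤ v (q.eval (s n)) := by
    intro n hn
    by_contra h
    push Not at h
    apply hqu
    obtain ⟨r, hr⟩ := WithTop.ne_top_iff_exists.1 (ne_top_of_lt h)
    refine ⟨r, ?_⟩
    filter_upwards [eventually_gt_atTop n] with m hmn
    have e : q.eval (s m) = q.eval (s n) + (q.eval (s m) - q.eval (s n)) := by ring
    rw [e, AddValuation.map_add_eq_of_lt_left, hr]
    rw [hN n hn m hmn]; exact h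
  have hq : ∀ n ≥ N, v (q.eval (s n)) = ((c + k * γ n : ℝ) : WithTop ℝ) := by
    intro n hn
    have h1 := hN n hn (n+1) (Nat.lt_succ_self n)
    have h2 := hge (n+1) (by omega)
    have h3 : ((c + k * γ n : ℝ) : WithTop ℝ) < ((c + k * γ (n+1) : ℝ) : WithTop ℝ) := by
      have := hm (Nat.lt_succ_self n)
      have : c + k * γ n < c + k * γ (n+1) := by nlinarith
      exact_mod_cast this
    rw [← AddValuation.map_neg] at h1
    have e : q.eval (s n) = -(q.eval (s (n+1)) - q.eval (s n)) + q.eval (s (n+1)) := by ring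
    rw [e, AddValuation.map_add_eq_of_lt_left, h1]
    rw [h1]; exact lt_of_lt_of_le h3 h2
  -- strong induction on the degree
  have main : ∀ d : ℕ, ∀ g : K[X], g.natDegree < d → g ≠ 0 → ∃ (c : ℝ) (k : ℕ),
      ∀ᶠ n in atTop, v (g.eval (s n)) = ((c + k * γ n : ℝ) : WithTop ℝ) := by
    intro d
    induction d with
    | zero => intro g hg; omega
    | succ d ih =>
      intro g hgd hg
      by_cases hlt : g.natDegree < q.natDegree
      · obtain ⟨c, hc⟩ := hst g hg hlt
        exact ⟨c, 0, by simpa using hc⟩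
      push Not at hlt
      have hdiv : g / q ≠ 0 := by
        intro h
        rw [Polynomial.div_eq_zero_iff hq0] at h
        have := natDegree_lt_natDegree hg h
        omega
      have hdeg : (g / q).natDegree < d := by
        have := natDegree_lt_natDegree hdiv (degree_div_lt hg (natDegree_pos_iff_degree_pos.1 hqpos))
        omega
      obtain ⟨c', k', hg'⟩ := ih (g / q) hdeg hdiv
      have hprod : ∀ᶠ n in atTop, v ((q * (g / q)).eval (s n)) =
          ((c + c' + (k + k' : ℕ) * γ n : ℝ) : WithTop ℝ) := by
        filter_upwards [hg', eventually_ge_atTop N] with n h1 h2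
        rw [eval_mul, v_mul v (hq n h2) h1]
        congr 1; push_cast; ring
      have hdm : q * (g / q) + g % q = g := EuclideanDomain.div_add_mod g q
      by_cases hr : g % q = 0
      · rw [hr, add_zero] at hdm
        rw [hdm] at hprod
        exact ⟨_, _, hprod⟩
      · have hlt' : (g % q).natDegree < q.natDegree :=
          natDegree_lt_natDegree hr (EuclideanDomain.mod_lt g hq0)
        obtain ⟨a, ha⟩ := hst _ hr hlt'
        have hkk : (((k + k' : ℕ)) : ℝ) ≠ 0 := by
          have : k + k' ≠ 0 := by omega
          exact_mod_cast this
        rcases lines γ hm (c + c' - a) ((k + k' : ℕ) : ℝ) hkk with h | h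
        · refine ⟨c + c', k + k', ?_⟩
          filter_upwards [h, ha, hprod] with n h1 h2 h3
          have hlt : c + c' + (k + k' : ℕ) * γ n < a := by linarith
          rw [← hdm, eval_add, AddValuation.map_add_eq_of_lt_left, h3]
          rw [h2, h3]
          exact_mod_cast hlt
        · refine ⟨a, 0, ?_⟩
          filter_upwards [h, ha, hprod] with n h1 h2 h3
          have hlt : a < c + c' + (k + k' : ℕ) * γ n := by linarith
          rw [← hdm, eval_add, AddValuation.map_add_eq_of_lt_right, h2]
          · simp
          · rw [h2, h3]
            exact_mod_cast hlt
  exact main _ f (Nat.lt_succ_self _) hf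

theorem VE_exists (v : AddValuation K (WithTop ℝ)) (s : ℕ → K) (hs : IsPC v s) :
    ∃ W : ValuationSubring (RatFunc K), (W : Set (RatFunc K)) = VESet v s := by
  obtain ⟨γ, hm, hγ⟩ := pc_real v s hs
  have hden : ∀ φ : RatFunc K, ∀ᶠ n in atTop,
      Polynomial.eval₂ (RingHom.id K) (s n) φ.denom ≠ 0 := by
    intro φ
    obtain ⟨c, k, h⟩ := linear_val v s γ hm hγ φ.denom φ.denom_ne_zero
    filter_upwards [h] with n hn h0
    rw [eval₂_id] at h0
    rw [h0, AddValuation.map_zero] at hn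
    exact WithTop.top_ne_coe hn
  have hsign : ∀ φ : RatFunc K, φ ≠ 0 →
      (∀ᶠ n in atTop, 0 ≤ v (RatFunc.eval (RingHom.id K) (s n) φ)) ∨
      (∀ᶠ n in atTop, v (RatFunc.eval (RingHom.id K) (s n) φ) ≤ 0) := by
    intro φ hφ
    obtain ⟨c, k, h⟩ := linear_val v s γ hm hγ φ.denom φ.denom_ne_zero
    obtain ⟨c', k', h'⟩ := linear_val v s γ hm hγ φ.num (RatFunc.num_ne_zero hφ)
    have hval : ∀ᶠ n in atTop, v (RatFunc.eval (RingHom.id K) (s n) φ)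
        = (((c' - c) + ((k' : ℝ) - k) * γ n : ℝ) : WithTop ℝ) := by
      filter_upwards [h, h'] with n h1 h2
      rw [RatFunc.eval, eval₂_id, eval₂_id, v_div v h2 h1]
      congr 1; ring
    by_cases hz : (k' : ℝ) - k = 0
    · rcases le_total 0 (c' - c) with h0 | h0
      · left
        filter_upwards [hval] with n hn
        rw [hn, hz, zero_mul, add_zero]; exact_mod_cast h0
      · right
        filter_upwards [hval] with n hn
        rw [hn, hz, zero_mul, add_zero]; exact_mod_cast h0
    · rcases lines γ hm (c' - c) _ hz with h0 | h0
      · right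
        filter_upwards [hval, h0] with n hn hn0
        rw [hn]; exact_mod_cast hn0.le
      · left
        filter_upwards [hval, h0] with n hn hn0
        rw [hn]; exact_mod_cast hn0.le
  refine ⟨{ carrier := VESet v s, mul_mem' := ?_, one_mem' := ?_, add_mem' := ?_, zero_mem' := ?_,
            neg_mem' := ?_, mem_or_inv_mem' := ?_ }, rfl⟩
  · intro a b ha hb
    show ∀ᶠ n in atTop, _
    filter_upwards [ha, hb, hden a, hden b] with n h1 h2 h3 h4
    rw [RatFunc.eval_mul _ _ h3 h4, AddValuation.map_mul]
    exact add_nonneg h1 h2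
  · show ∀ᶠ n in atTop, _
    simp
  · intro a b ha hb
    show ∀ᶠ n in atTop, _
    filter_upwards [ha, hb, hden a, hden b] with n h1 h2 h3 h4
    rw [RatFunc.eval_add _ _ h3 h4]
    exact AddValuation.map_le_add v h1 h2
  · show ∀ᶠ n in atTop, _
    simp
  · intro a ha
    show ∀ᶠ n in atTop, _
    have hc : ∀ᶠ n in atTop, 0 ≤ v (RatFunc.eval (RingHom.id K) (s n) (-1 : RatFunc K)) := by
      have e : (-1 : RatFunc K) = RatFunc.C (-1) := by simp
      refine Eventually.of_forall fun n => ?_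
      rw [e, RatFunc.eval_C, RingHom.id_apply, AddValuation.map_neg, AddValuation.map_one]
    filter_upwards [ha, hc, hden a, hden (-1)] with n h1 h2 h3 h4
    rw [← neg_one_mul a, RatFunc.eval_mul _ _ h4 h3, AddValuation.map_mul]
    exact add_nonneg h2 h1
  · intro φ
    show φ ∈ VESet v s ∨ φ⁻¹ ∈ VESet v s
    by_cases hφ : φ = 0
    · left
      subst hφ
      show ∀ᶠ n in atTop, _
      simp
    rcases hsign φ hφ with h | h
    · exact Or.inl h
    · right
      show ∀ᶠ n in atTop, _
      filter_upwards [h, hden φ, hden φ⁻¹] with n h1 h2 h3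
      have e := RatFunc.eval_mul _ _ h2 h3
      rw [mul_inv_cancel₀ hφ, RatFunc.eval_one] at e
      have e2 := congrArg v e
      rw [AddValuation.map_mul, AddValuation.map_one] at e2
      by_contra h4
      push Not at h4
      have : v (RatFunc.eval (RingHom.id K) (s n) φ) + v (RatFunc.eval (RingHom.id K) (s n) φ⁻¹) < 0 := by
        calc _ ≤ 0 + v (RatFunc.eval (RingHom.id K) (s n) φ⁻¹) := by gcongr
          _ < 0 := by simpa using h4
      exact absurd e2.symm this.ne

theorem dK_le (v : AddValuation K (WithTop ℝ)) (x y : K) (r : ℝ)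
    (h : (r : WithTop ℝ) ≤ v (x - y)) : dK v x y ≤ Real.exp (-r) := by
  unfold dK expNeg
  cases hh : v (x - y) with
  | top => simpa using (Real.exp_pos _).le
  | coe a =>
    rw [hh] at h
    have : r ≤ a := by exact_mod_cast h
    simpa using this

theorem le_of_dK_lt (v : AddValuation K (WithTop ℝ)) (x y : K) (r : ℝ)
    (h : dK v x y < Real.exp (-r)) : (r : WithTop ℝ) ≤ v (x - y) := by
  unfold dK expNeg at h
  cases hh : v (x - y) with
  | top => exact le_top
  | coe a =>
    rw [hh] at h
    have : r < a := by simpa using h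
    exact_mod_cast this.le

/-- If eventually `v (s n - t n) ≥ r`, `r < δ`, the distance is at most `e^{-r} - e^{-δ}`. -/
theorem dd_le (v : AddValuation K (WithTop ℝ)) (δ r l : ℝ) (hr : r < δ) (s t : ℕ → K)
    (hl : Tendsto (fun n => max (dK v (s n) (t n) - expNeg (δ : WithTop ℝ)) 0) atTop (𝓝 l))
    (h : ∀ᶠ n in atTop, (r : WithTop ℝ) ≤ v (s n - t n)) :
    l ≤ Real.exp (-r) - Real.exp (-δ) := by
  refine le_of_tendsto hl ?_
  filter_upwards [h] with n hn
  have h1 := dK_le v _ _ r hn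
  have h2 : Real.exp (-δ) < Real.exp (-r) := by simpa using hr
  have h3 : expNeg (δ : WithTop ℝ) = Real.exp (-δ) := rfl
  rw [h3]
  apply max_le <;> linarith

theorem exists_level (δ ε : ℝ) (hε : 0 < ε) (γ : ℕ → ℝ)
    (hγ : ∀ r < δ, ∃ N, ∀ n ≥ N, r < γ n) :
    ∃ N, ∀ n ≥ N, Real.exp (-γ n) - Real.exp (-δ) < ε := by
  have hpos : 0 < Real.exp (-δ) + ε := by positivity
  obtain ⟨N, hN⟩ := hγ (-Real.log (Real.exp (-δ) + ε)) (by
    have : -δ < Real.log (Real.exp (-δ) + ε) := by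
      rw [Real.lt_log_iff_exp_lt hpos]; linarith
    linarith)
  refine ⟨N, fun n hn => ?_⟩
  have h := hN n hn
  have : Real.exp (-γ n) < Real.exp (-δ) + ε := by
    rw [← Real.lt_log_iff_exp_lt hpos]; linarith
  linarith

/-- For `δ ∈ ℝ`, `(𝒱(•,δ), d_δ)` is a complete metric space in which
`𝒱_K(•,δ)` is dense; that is, `𝒱(•,δ)` is the completion of `𝒱_K(•,δ)` under `d_δ`. -/
theorem statement2 (v : AddValuation K (WithTop ℝ)) (hv : IsRankOne v)
    (δ : ℝ)
    (dd : ValuationSubring (RatFunc K) → ValuationSubring (RatFunc K) → ℝ)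
    (hdd : IsDistδ v (δ : WithTop ℝ) dd) :
    (∀ f : ℕ → ValuationSubring (RatFunc K), (∀ n, f n ∈ VVδ v (δ : WithTop ℝ)) →
      (∀ ε : ℝ, 0 < ε → ∃ N, ∀ m ≥ N, ∀ n ≥ N, dd (f m) (f n) < ε) →
      ∃ W ∈ VVδ v (δ : WithTop ℝ), ∀ ε : ℝ, 0 < ε → ∃ N, ∀ n ≥ N, dd (f n) W < ε) ∧
    (∀ W ∈ VVδ v (δ : WithTop ℝ), ∀ ε : ℝ, 0 < ε →
      ∃ W' ∈ VVKδ v (δ : WithTop ℝ), dd W W' < ε) := by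
  constructor
  · intro f hf hC
    choose s hs hb hW using hf
    choose g hgm hg using fun n => pc_real v (s n) (hs n)
    have hbr := fun n => breadth_real v (s n) (g n) (hgm n) (hg n) δ (hb n)
    set γ := g 0 with hγdef
    have hγm : StrictMono γ := hgm 0
    have hγδ : ∀ j, γ j < δ := (hbr 0).1
    -- centres of the nested balls
    have hx : ∀ j, ∃ (x : K) (N : ℕ), ∀ n ≥ N, ∀ᶠ k in atTop,
        (γ j : WithTop ℝ) ≤ v (s n k - x) := by
      intro j
      have hexp : Real.exp (-δ) < Real.exp (-γ j) := by simpa using hγδ j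
      obtain ⟨N, hN⟩ := hC (Real.exp (-γ j) - Real.exp (-δ)) (by linarith)
      obtain ⟨i, hi⟩ := (hbr N).2 (γ j) (hγδ j)
      refine ⟨s N i, N, fun n hn => ?_⟩
      have ht := hdd (f n) (f N) (s n) (s N) (hs n) (hb n) (hW n) (hs N) (hb N) (hW N)
      have hlt := ht.eventually (gt_mem_nhds (hN n hn N le_rfl))
      filter_upwards [hlt, eventually_gt_atTop i] with k h1 h2
      have h3 : expNeg (δ : WithTop ℝ) = Real.exp (-δ) := rfl
      rw [h3] at h1
      have h4 := (le_max_left _ _).trans_lt h1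
      have h5 := le_of_dK_lt v (s n k) (s N k) (γ j) (by linarith)
      have h6 := hg N i k h2
      have e : s n k - s N i = (s n k - s N k) + (s N k - s N i) := by ring
      rw [e]
      apply AddValuation.map_le_add v h5
      rw [h6]
      exact_mod_cast (hi i le_rfl).le
    choose x N hxN using hx
    have hxx : ∀ j i, j ≤ i → (γ j : WithTop ℝ) ≤ v (x i - x j) := by
      intro j i hji
      obtain ⟨k, h1, h2⟩ := ((hxN j (max (N j) (N i)) (le_max_left _ _)).and
        (hxN i (max (N j) (N i)) (le_max_right _ _))).exists
      have e : x i - x j = (s (max (N j) (N i)) k - x j) - (s (max (N j) (N i)) k - x i) := by ring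
      rw [e]
      refine AddValuation.map_le_sub v h1 (le_trans ?_ h2)
      exact_mod_cast hγm.monotone hji
    let cc : ℕ → K := fun j => s 0 (j+1) - s 0 j
    have hcc : ∀ j, v (cc j) = (γ j : WithTop ℝ) := fun j => hg 0 j (j+1) (Nat.lt_succ_self j)
    let t : ℕ → K := fun j => x (j+1) + cc j
    have ht : ∀ j, v (t (j+1) - t j) = (γ j : WithTop ℝ) := by
      intro j
      have e : t (j+1) - t j = -cc j + ((x (j+2) - x (j+1)) + cc (j+1)) := by
        simp only [t]; ring
      rw [e, AddValuation.map_add_eq_of_lt_left, AddValuation.map_neg, hcc]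
      rw [AddValuation.map_neg, hcc]
      have h1 : (γ j : WithTop ℝ) < γ (j+1) := by exact_mod_cast hγm (Nat.lt_succ_self j)
      exact lt_of_lt_of_le h1 (AddValuation.map_le_add v (hxx (j+1) (j+2) (by omega)) (hcc _).ge)
    have htPC : IsPC v t := by
      intro j
      rw [ht j, ht (j+1)]
      exact_mod_cast hγm (Nat.lt_succ_self j)
    have htb : IsBreadth v t (δ : WithTop ℝ) := by
      have h0 := hb 0
      unfold IsBreadth at h0 ⊢
      have e : (fun n => v (t (n+1) - t n)) = fun n => v (s 0 (n+1) - s 0 n) :=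
        funext fun n => (ht n).trans (hcc n).symm
      rw [e]; exact h0
    obtain ⟨W, hWt⟩ := VE_exists v t htPC
    refine ⟨W, ⟨t, htPC, htb, hWt⟩, fun ε hε => ?_⟩
    obtain ⟨j, hj⟩ := exists_level δ ε hε γ (hbr 0).2
    refine ⟨N j, fun n hn => ?_⟩
    refine lt_of_le_of_lt (dd_le v δ (γ j) _ (hγδ j) (s n) t
      (hdd (f n) W (s n) t (hs n) (hb n) (hW n) htPC htb hWt) ?_) (hj j le_rfl)
    filter_upwards [hxN j n hn, eventually_ge_atTop j] with k h1 h2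
    have e : s n k - t k = (s n k - x j) - ((x (k+1) - x j) + cc k) := by
      simp only [t]; ring
    rw [e]
    refine AddValuation.map_le_sub v h1 (AddValuation.map_le_add v (hxx j (k+1) (by omega)) ?_)
    rw [hcc]
    exact_mod_cast hγm.monotone h2
  · rintro W ⟨s, hs, hb, hW⟩ ε hε
    obtain ⟨γ, hγm, hγ⟩ := pc_real v s hs
    obtain ⟨hγδ, hlim⟩ := breadth_real v s γ hγm hγ δ hb
    obtain ⟨N, hN⟩ := exists_level δ ε hε γ hlim
    let cc : ℕ → K := fun j => s (j+1) - s j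
    have hcc : ∀ j, v (cc j) = (γ j : WithTop ℝ) := fun j => hγ j (j+1) (Nat.lt_succ_self j)
    let t : ℕ → K := fun j => s N + cc j
    have hlt : ∀ j, (γ j : WithTop ℝ) < γ (j+1) := fun j => by
      exact_mod_cast hγm (Nat.lt_succ_self j)
    have ht : ∀ j, v (t (j+1) - t j) = (γ j : WithTop ℝ) := by
      intro j
      have e : t (j+1) - t j = -cc j + cc (j+1) := by
        simp only [t]; ring
      rw [e, AddValuation.map_add_eq_of_lt_left, AddValuation.map_neg, hcc]
      rw [AddValuation.map_neg, hcc, hcc]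
      exact hlt j
    have htPC : IsPC v t := by
      intro j
      rw [ht j, ht (j+1)]
      exact hlt j
    have htb : IsBreadth v t (δ : WithTop ℝ) := by
      unfold IsBreadth at hb ⊢
      have e : (fun n => v (t (n+1) - t n)) = fun n => v (s (n+1) - s n) :=
        funext fun n => (ht n).trans (hcc n).symm
      rw [e]; exact hb
    obtain ⟨W', hWt⟩ := VE_exists v t htPC
    have hpl : IsPCLimit v t (s N) := by
      intro j
      have e : ∀ j, s N - t j = - cc j := fun j => by simp only [t]; ring
      rw [e, e, AddValuation.map_neg, AddValuation.map_neg, hcc, hcc]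
      exact hlt j
    refine ⟨W', ⟨t, htPC, htb, ⟨_, hpl⟩, hWt⟩, ?_⟩
    refine lt_of_le_of_lt (dd_le v δ (γ N) _ (hγδ N) s t
      (hdd W W' s t hs hb hW htPC htb hWt) ?_) (hN N le_rfl)
    filter_upwards [eventually_gt_atTop N] with k hk
    have e : s k - t k = (s k - s N) - cc k := by simp only [t]; ring
    rw [e]
    refine AddValuation.map_le_sub v (hγ N k hk).ge ?_
    rw [hcc]
    exact_mod_cast hγm.monotone hk.le

end PaperPCZar
end
end

section
/- Let δ ∈ ℝ∪{∞}. The closure of 𝒱(•,δ) in 𝒱 with respect to the Zariski topology is equal to the union ⋃_{δ'≤δ} 𝒱(•,δ') over all δ' ∈ ℝ∪{∞} with δ' ≤ δ. -/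
open Filter Topology TopologicalSpace Set Polynomial

noncomputable section

namespace PaperPCZar

variable {K : Type*} [Field K]

lemma pc_mono {v : AddValuation K (WithTop ℝ)} {s : ℕ → K} (hs : IsPC v s) :
    StrictMono (fun n => v (s (n + 1) - s n)) := strictMono_nat_of_lt_succ hs

lemma pc_dist {v : AddValuation K (WithTop ℝ)} {s : ℕ → K} (hs : IsPC v s) (n k : ℕ) :
    v (s (n + 1 + k) - s n) = v (s (n + 1) - s n) := by
  induction k with
  | zero => rfl
  | succ k ih =>
    have h : s (n + 1 + (k + 1)) - s n
        = (s (n + 1 + k) - s n) + (s (n + 1 + k + 1) - s (n + 1 + k)) := by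
      rw [← add_assoc]; ring
    rw [h, AddValuation.map_add_eq_of_lt_left, ih]
    rw [ih]
    exact pc_mono hs (by omega)

lemma pc_dist' {v : AddValuation K (WithTop ℝ)} {s : ℕ → K} (hs : IsPC v s) {n m : ℕ}
    (h : n < m) : v (s m - s n) = v (s (n + 1) - s n) := by
  obtain ⟨k, rfl⟩ := Nat.exists_eq_add_of_lt h
  have := pc_dist hs n k
  rwa [show n + 1 + k = n + k + 1 by omega] at this

lemma pc_dist_ball {v : AddValuation K (WithTop ℝ)} {s : ℕ → K} (hs : IsPC v s) {n m : ℕ}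
    (h : n < m) {a b : K} (ha : v (s (n + 1) - s n) < v (a - s n))
    (hb : v (s (m + 1) - s m) < v (b - s m)) : v (b - a) = v (s (n + 1) - s n) := by
  have e : b - a = (s m - s n) + ((b - s m) - (a - s n)) := by ring
  have h1 := pc_dist' hs h
  rw [e, AddValuation.map_add_eq_of_lt_left, h1]
  rw [h1]
  refine lt_of_lt_of_le (lt_min ?_ ha) (AddValuation.map_sub _ _ _)
  exact lt_trans (pc_mono hs h) hb

lemma prod_le_prod_val (v : AddValuation K (WithTop ℝ)) (J : Finset ℕ) (f g : ℕ → K)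
    (h : ∀ i ∈ J, v (f i) ≤ v (g i)) : v (∏ i ∈ J, f i) ≤ v (∏ i ∈ J, g i) := by
  classical
  induction J using Finset.induction_on with
  | empty => simp
  | insert a J ha ih =>
    rw [Finset.prod_insert ha, Finset.prod_insert ha, AddValuation.map_mul, AddValuation.map_mul]
    exact add_le_add (h a (by simp)) (ih fun i hi => h i (by simp [hi]))

/-- Away from finitely many indices, the valuation of `f` is constant on the
pairwise disjoint balls around the `s n`. -/
lemma eventually_const {v : AddValuation K (WithTop ℝ)} {s : ℕ → K} (hs : IsPC v s)
    (f : K[X]) : ∀ᶠ n in atTop, ∀ x, v (s (n + 1) - s n) < v (x - s n) →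
      v (f.eval x) = v (f.eval (s n)) := by
  classical
  by_contra hcon
  rw [not_eventually] at hcon
  have hlt : ∀ n, v (s (n + 1) - s n) < v (s n - s n) := fun n => by
    rw [sub_self, AddValuation.map_zero]; exact lt_top_of_lt (hs n)
  have key : ∀ n, ∃ x y, (¬ ∀ x, v (s (n + 1) - s n) < v (x - s n) →
      v (f.eval x) = v (f.eval (s n))) → (v (s (n + 1) - s n) < v (x - s n) ∧
        v (s (n + 1) - s n) < v (y - s n) ∧ v (f.eval y) < v (f.eval x)) := by
    intro n
    by_cases h : ∀ x, v (s (n + 1) - s n) < v (x - s n) → v (f.eval x) = v (f.eval (s n))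
    · exact ⟨0, 0, fun h' => absurd h h'⟩
    · have h0 := h
      push Not at h
      obtain ⟨x, hx, hne⟩ := h
      rcases lt_or_gt_of_ne hne with h1 | h1
      · exact ⟨s n, x, fun _ => ⟨hlt n, hx, h1⟩⟩
      · exact ⟨x, s n, fun _ => ⟨hx, hlt n, h1⟩⟩
  choose x y hxy using key
  have hinf := Nat.frequently_atTop_iff_infinite.1 hcon
  obtain ⟨J, hJ, hcard⟩ := hinf.exists_subset_card_eq (f.natDegree + 1)
  have hJ' : ∀ n ∈ J, v (s (n + 1) - s n) < v (x n - s n) ∧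
        v (s (n + 1) - s n) < v (y n - s n) ∧ v (f.eval (y n)) < v (f.eval (x n)) :=
    fun n hn => hxy n (hJ hn)
  have hdist : ∀ i ∈ J, ∀ j ∈ J, i ≠ j → v (y i - x j) = v (x i - x j) ∧
      v (x i - x j) ≤ v (s (i + 1) - s i) ∧ v (x i - x j) ≠ ⊤ := by
    intro i hi j hj hij
    rcases lt_or_gt_of_ne hij with h | h
    · rw [AddValuation.map_sub_swap v (y i), AddValuation.map_sub_swap v (x i),
        pc_dist_ball hs h (hJ' i hi).1 (hJ' j hj).1, pc_dist_ball hs h (hJ' i hi).2.1 (hJ' j hj).1]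
      exact ⟨rfl, le_rfl, ne_top_of_lt (hs i)⟩
    · rw [pc_dist_ball hs h (hJ' j hj).1 (hJ' i hi).1, pc_dist_ball hs h (hJ' j hj).1 (hJ' i hi).2.1]
      exact ⟨rfl, (pc_mono hs h).le, ne_top_of_lt (hs j)⟩
  have hne : ∀ i ∈ J, ∀ j ∈ J, i ≠ j → x i - x j ≠ 0 := fun i hi j hj hij =>
    (AddValuation.ne_top_iff v).1 (hdist i hi j hj hij).2.2
  have hinj : Set.InjOn x (J : Set ℕ) := by
    intro i hi j hj hij
    by_contra h
    exact hne i hi j hj h (sub_eq_zero.2 hij)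
  have hf := Lagrange.eq_interpolate (f := f) (s := J) (v := x) hinj (by
    rw [hcard]
    exact lt_of_le_of_lt Polynomial.degree_le_natDegree (by exact_mod_cast Nat.lt_succ_self _))
  let P : ℕ → K := fun j => ∏ i ∈ J.erase j, (x j - x i)
  have hP : ∀ j ∈ J, P j ≠ 0 := fun j hj => Finset.prod_ne_zero_iff.2 fun i hi =>
    hne j hj i (Finset.mem_of_mem_erase hi) (Finset.ne_of_mem_erase hi).symm
  have heval : ∀ z, f.eval z
      = ∑ j ∈ J, (f.eval (x j) * (P j)⁻¹) * ∏ i ∈ J.erase j, (z - x i) := by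
    intro z
    conv_lhs => rw [hf]
    rw [Lagrange.interpolate_apply, Polynomial.eval_finsetSum]
    refine Finset.sum_congr rfl fun j hj => ?_
    simp only [Lagrange.basis, Lagrange.basisDivisor, Polynomial.eval_mul, Polynomial.eval_C,
      Polynomial.eval_prod, Polynomial.eval_sub, Polynomial.eval_X, Finset.prod_mul_distrib, P,
      Finset.prod_inv_distrib]
    ring
  have hJne : J.Nonempty := Finset.card_pos.1 (by omega)
  obtain ⟨k, hk, hmin⟩ := J.exists_min_image (fun j => v (f.eval (x j) * (P j)⁻¹)) hJne
  refine absurd (hJ' k hk).2.2 (not_lt.2 ?_)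
  rw [heval (y k)]
  refine AddValuation.map_le_sum v fun j hj => ?_
  have e1 : f.eval (x k) = (f.eval (x k) * (P k)⁻¹) * P k := by
    rw [mul_assoc, inv_mul_cancel₀ (hP k hk), mul_one]
  rw [e1, AddValuation.map_mul, AddValuation.map_mul v _ (∏ i ∈ J.erase j, (y k - x i))]
  refine add_le_add (hmin j hj) ?_
  by_cases hjk : j = k
  · subst hjk
    exact prod_le_prod_val v _ _ _ fun i hi => (hdist j hj i (Finset.mem_of_mem_erase hi)
      (Finset.ne_of_mem_erase hi).symm).1.ge
  · have m1 : j ∈ J.erase k := Finset.mem_erase.2 ⟨hjk, hj⟩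
    have m2 : k ∈ J.erase j := Finset.mem_erase.2 ⟨fun h => hjk h.symm, hk⟩
    change v (∏ i ∈ J.erase k, (x k - x i)) ≤ _
    rw [← Finset.mul_prod_erase _ _ m1, ← Finset.mul_prod_erase _ _ m2,
      AddValuation.map_mul, AddValuation.map_mul, Finset.erase_right_comm]
    refine add_le_add ?_ (prod_le_prod_val v _ _ _ fun i hi => ?_)
    · refine (hdist k hk j hj (Ne.symm hjk)).2.1.trans ?_
      have e : y k - x k = (y k - s k) - (x k - s k) := by ring
      rw [e]
      exact AddValuation.map_le_sub v (hJ' k hk).2.1.le (hJ' k hk).1.le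
    · have hi' := Finset.mem_of_mem_erase hi
      rw [Finset.mem_erase] at hi hi'
      rw [Finset.mem_erase] at hi
      exact (hdist k hk i hi.2.2 (Ne.symm hi.1)).1.ge

lemma sign_eventually {γ : ℕ → ℝ} (hγ : StrictMono γ) (b κ : ℝ) :
    (∀ᶠ m in atTop, 0 ≤ b + κ * γ m) ∨ (∀ᶠ m in atTop, b + κ * γ m ≤ 0) := by
  have main : ∀ b κ : ℝ, 0 ≤ κ →
      (∀ᶠ m in atTop, 0 ≤ b + κ * γ m) ∨ (∀ᶠ m in atTop, b + κ * γ m ≤ 0) := by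
    intro b κ hκ
    by_cases h : ∃ m, 0 ≤ b + κ * γ m
    · obtain ⟨m, hm⟩ := h
      left
      filter_upwards [eventually_ge_atTop m] with n hn
      have := mul_le_mul_of_nonneg_left (hγ.monotone hn) hκ
      linarith
    · push Not at h
      exact Or.inr (Eventually.of_forall fun m => (h m).le)
  rcases le_total 0 κ with h | h
  · exact main b κ h
  · rcases main (-b) (-κ) (by linarith) with h | h
    · right; filter_upwards [h] with m hm; linarith
    · left; filter_upwards [h] with m hm; linarith

lemma poly_val {v : AddValuation K (WithTop ℝ)} {γ : ℕ → ℝ} (hγ : StrictMono γ) {c : ℕ → K}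
    (hc : ∀ m, v (c m) = (γ m : WithTop ℝ)) (p : K[X]) : p ≠ 0 →
    ∃ (β : ℝ) (k : ℕ), (p.coeff 0 = 0 → 1 ≤ k) ∧
      ∀ᶠ m in atTop, v (p.eval (c m)) = ((β + k * γ m : ℝ) : WithTop ℝ) := by
  induction p using Polynomial.recOnHorner with
  | M0 => intro h; exact absurd rfl h
  | MC p a hp ha ih =>
    intro _
    obtain ⟨r, hr⟩ := WithTop.ne_top_iff_exists.1 ((AddValuation.ne_top_iff v).2 ha)
    have hcoef : (p + Polynomial.C a).coeff 0 ≠ 0 := by simp [hp, ha]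
    by_cases hp0 : p = 0
    · refine ⟨r, 0, fun h => absurd h hcoef, Eventually.of_forall fun m => ?_⟩
      simp [hp0, ← hr]
    · obtain ⟨β, k, hk, hev⟩ := ih hp0
      have hk1 : (1 : ℝ) ≤ k := by exact_mod_cast hk hp
      have hmono : StrictMono fun m => β + k * γ m := fun i j hij => by
        have := mul_lt_mul_of_pos_left (hγ hij) (by linarith : (0 : ℝ) < k)
        simp only; linarith
      by_cases h : ∃ m, r ≤ β + k * γ m
      · obtain ⟨m, hm⟩ := h
        refine ⟨r, 0, fun h => absurd h hcoef, ?_⟩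
        filter_upwards [hev, eventually_gt_atTop m] with n hn hmn
        have := hmono hmn
        simp only at this
        rw [Polynomial.eval_add, Polynomial.eval_C, AddValuation.map_add_eq_of_lt_right, ← hr]
        · simp
        · rw [hn, ← hr]; exact_mod_cast lt_of_le_of_lt hm this
      · push Not at h
        refine ⟨β, k, fun h => absurd h hcoef, ?_⟩
        filter_upwards [hev] with n hn
        rw [Polynomial.eval_add, Polynomial.eval_C, AddValuation.map_add_eq_of_lt_left, hn]
        rw [hn, ← hr]; exact_mod_cast h n
  | MX p hp ih =>
    intro _
    obtain ⟨β, k, -, hev⟩ := ih hp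
    refine ⟨β, k + 1, fun _ => by omega, ?_⟩
    filter_upwards [hev] with m hm
    rw [Polynomial.eval_mul, Polynomial.eval_X, AddValuation.map_mul, hm, hc, ← WithTop.coe_add]
    congr 1
    push_cast; ring

lemma poly_val' {v : AddValuation K (WithTop ℝ)} {γ : ℕ → ℝ} (hγ : StrictMono γ) {c : ℕ → K}
    (hc : ∀ m, v (c m) = (γ m : WithTop ℝ)) (α : K) (p : K[X]) (hp : p ≠ 0) :
    ∃ (β : ℝ) (k : ℕ),
      ∀ᶠ m in atTop, v (p.eval (α + c m)) = ((β + k * γ m : ℝ) : WithTop ℝ) := by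
  have h0 : p.comp (Polynomial.X + Polynomial.C α) ≠ 0 := by
    rw [Ne, Polynomial.comp_eq_zero_iff]
    rintro (h | h)
    · exact hp h
    · have := congrArg (fun q => Polynomial.coeff q 1) h.2
      simp [Polynomial.coeff_C] at this
  obtain ⟨β, k, -, h⟩ := poly_val hγ hc _ h0
  refine ⟨β, k, ?_⟩
  filter_upwards [h] with m hm
  rw [← hm, Polynomial.eval_comp]
  simp [add_comm]

lemma poly_ne {v : AddValuation K (WithTop ℝ)} {γ : ℕ → ℝ} (hγ : StrictMono γ) {c : ℕ → K}
    (hc : ∀ m, v (c m) = (γ m : WithTop ℝ)) (α : K) (p : K[X]) (hp : p ≠ 0) :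
    ∀ᶠ m in atTop, p.eval₂ (RingHom.id K) (α + c m) ≠ 0 := by
  obtain ⟨β, k, h⟩ := poly_val' hγ hc α p hp
  filter_upwards [h] with m hm
  rw [Polynomial.eval₂_id, ← AddValuation.ne_top_iff v, hm]
  exact WithTop.coe_ne_top

lemma ratfunc_sign {v : AddValuation K (WithTop ℝ)} {γ : ℕ → ℝ} (hγ : StrictMono γ) {c : ℕ → K}
    (hc : ∀ m, v (c m) = (γ m : WithTop ℝ)) (α : K) (φ : RatFunc K) :
    φ ∈ VESet v (fun m => α + c m) ∨ φ⁻¹ ∈ VESet v (fun m => α + c m) := by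
  by_cases hφ : φ = 0
  · left; subst hφ; simp [VESet]
  obtain ⟨β, k, h1⟩ := poly_val' hγ hc α _ (RatFunc.num_ne_zero hφ)
  obtain ⟨β', k', h2⟩ := poly_val' hγ hc α _ (RatFunc.denom_ne_zero φ)
  have n1 := poly_ne hγ hc α _ (RatFunc.denom_ne_zero φ)
  have n2 := poly_ne hγ hc α _ (RatFunc.denom_ne_zero φ⁻¹)
  have h3 : ∀ᶠ m in atTop, v (RatFunc.eval (RingHom.id K) (α + c m) φ) =
      (((β - β') + (k - k') * γ m : ℝ) : WithTop ℝ) := by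
    filter_upwards [h1, h2, n1] with m a1 a2 a3
    have e : RatFunc.eval (RingHom.id K) (α + c m) φ * (φ.denom.eval (α + c m))
        = φ.num.eval (α + c m) := by
      rw [RatFunc.eval, Polynomial.eval₂_id, Polynomial.eval₂_id]
      rw [Polynomial.eval₂_id] at a3
      exact div_mul_cancel₀ _ a3
    have e' := congrArg v e
    rw [AddValuation.map_mul, a1, a2] at e'
    have e3 : (β - β') + (k - k') * γ m = (β + k * γ m) - (β' + k' * γ m) := by ring
    rw [e3]
    generalize v (RatFunc.eval (RingHom.id K) (α + c m) φ) = w at e' ⊢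
    generalize β + k * γ m = p at e' ⊢
    generalize β' + k' * γ m = q at e' ⊢
    induction w using WithTop.recTopCoe with
    | top => rw [WithTop.top_add] at e'; exact absurd e' WithTop.top_ne_coe
    | coe w =>
      norm_cast at e' ⊢
      linarith
  rcases sign_eventually hγ (β - β') (k - k') with h | h
  · left
    filter_upwards [h, h3] with m a1 a2
    rw [a2]; exact_mod_cast a1
  · right
    filter_upwards [h, h3, n1, n2] with m a1 a2 a3 a4
    have e := RatFunc.eval_mul (RingHom.id K) (a := α + c m) a3 a4
    rw [mul_inv_cancel₀ hφ, RatFunc.eval_one] at e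
    have e' := congrArg v e
    rw [AddValuation.map_mul, a2, AddValuation.map_one] at e'
    generalize v (RatFunc.eval (RingHom.id K) (α + c m) φ⁻¹) = w at e' ⊢
    generalize β - β' + (k - k') * γ m = p at e' a1
    induction w using WithTop.recTopCoe with
    | top => simp
    | coe w =>
      norm_cast at e' ⊢
      linarith

lemma exists_valring {v : AddValuation K (WithTop ℝ)} {γ : ℕ → ℝ} (hγ : StrictMono γ) {c : ℕ → K}
    (hc : ∀ m, v (c m) = (γ m : WithTop ℝ)) (α : K) :
    ∃ W : ValuationSubring (RatFunc K), (W : Set (RatFunc K)) = VESet v (fun m => α + c m) := by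
  have hmul : ∀ {a b : RatFunc K}, a ∈ VESet v (fun m => α + c m) →
      b ∈ VESet v (fun m => α + c m) → a * b ∈ VESet v (fun m => α + c m) := by
    intro a b ha hb
    filter_upwards [ha, hb, poly_ne hγ hc α _ (RatFunc.denom_ne_zero a),
      poly_ne hγ hc α _ (RatFunc.denom_ne_zero b)] with m h1 h2 h3 h4
    rw [RatFunc.eval_mul _ _ h3 h4, AddValuation.map_mul]
    exact add_nonneg h1 h2
  have hC : ∀ a : K, 0 ≤ v a → RatFunc.C a ∈ VESet v (fun m => α + c m) := by
    intro a ha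
    refine Eventually.of_forall fun m => ?_
    rw [RatFunc.eval_C]; exact ha
  have h1 : (1 : RatFunc K) ∈ VESet v (fun m => α + c m) := by
    have := hC 1 (by simp)
    rwa [map_one] at this
  have h0 : (0 : RatFunc K) ∈ VESet v (fun m => α + c m) := by
    have := hC 0 (by simp)
    rwa [map_zero] at this
  have hm1 : (-1 : RatFunc K) ∈ VESet v (fun m => α + c m) := by
    have := hC (-1) (by rw [AddValuation.map_neg]; simp)
    rwa [map_neg, map_one] at this
  refine ⟨{ carrier := VESet v (fun m => α + c m), mul_mem' := hmul, one_mem' := h1,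
            zero_mem' := h0, add_mem' := ?_, neg_mem' := ?_,
            mem_or_inv_mem' := ratfunc_sign hγ hc α }, rfl⟩
  · intro a b ha hb
    filter_upwards [ha, hb, poly_ne hγ hc α _ (RatFunc.denom_ne_zero a),
      poly_ne hγ hc α _ (RatFunc.denom_ne_zero b)] with m h1 h2 h3 h4
    rw [RatFunc.eval_add _ _ h3 h4]
    exact AddValuation.map_le_add v h1 h2
  · intro a ha
    rw [neg_eq_neg_one_mul]
    exact hmul hm1 ha

lemma ordLim_coe {g : ℕ → ℝ} {d : ℝ} (h : Tendsto g atTop (𝓝 d)) :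
    OrdLim (fun n => (g n : WithTop ℝ)) d := by
  constructor
  · intro a ha
    lift a to ℝ using ne_top_of_lt ha
    rw [WithTop.coe_lt_coe] at ha
    filter_upwards [h.eventually_const_lt ha] with n hn
    exact_mod_cast hn
  · intro b hb
    induction b using WithTop.recTopCoe with
    | top => exact Eventually.of_forall fun n => WithTop.coe_lt_top _
    | coe b =>
      rw [WithTop.coe_lt_coe] at hb
      filter_upwards [h.eventually_lt_const hb] with n hn
      exact_mod_cast hn

lemma ordLim_top {g : ℕ → ℝ} (h : Tendsto g atTop atTop) :
    OrdLim (fun n => (g n : WithTop ℝ)) ⊤ := by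
  constructor
  · intro a ha
    lift a to ℝ using ne_top_of_lt ha
    filter_upwards [h.eventually_gt_atTop a] with n hn
    exact_mod_cast hn
  · intro b hb
    exact absurd hb not_top_lt

lemma exists_real {v : AddValuation K (WithTop ℝ)} {s : ℕ → K} (hs : IsPC v s) :
    ∃ g : ℕ → ℝ, StrictMono g ∧ ∀ n, v (s (n + 1) - s n) = (g n : WithTop ℝ) := by
  have : ∀ n, ∃ r : ℝ, v (s (n + 1) - s n) = (r : WithTop ℝ) := fun n => by
    obtain ⟨r, hr⟩ := WithTop.ne_top_iff_exists.1 (ne_top_of_lt (hs n))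
    exact ⟨r, hr.symm⟩
  choose g hg using this
  refine ⟨g, fun i j hij => ?_, hg⟩
  have := pc_mono hs hij
  simp only [hg] at this
  exact_mod_cast this

/-- Existence of the breadth. -/
lemma exists_breadth {v : AddValuation K (WithTop ℝ)} {s : ℕ → K} (hs : IsPC v s) :
    ∃ δ, IsBreadth v s δ := by
  obtain ⟨g, hg, hv⟩ := exists_real hs
  simp only [IsBreadth, hv]
  rcases tendsto_atTop_of_monotone hg.monotone with h | ⟨l, h⟩
  · exact ⟨⊤, ordLim_top h⟩
  · exact ⟨l, ordLim_coe h⟩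

lemma exists_small {v : AddValuation K (WithTop ℝ)} {s : ℕ → K} (hs : IsPC v s) {d : ℝ}
    (hd : IsBreadth v s (d : WithTop ℝ)) (ε : ℝ) (hε : 0 < ε) :
    ∃ (u : K) (e : ℝ), v u = (e : WithTop ℝ) ∧ 0 < e ∧ e < ε := by
  obtain ⟨g, hg, hv⟩ := exists_real hs
  simp only [IsBreadth, hv] at hd
  have h1 := hd.1 ((d - ε / 2 : ℝ) : WithTop ℝ) (by rw [WithTop.coe_lt_coe]; linarith)
  have h2 := hd.2 ((d + ε / 2 : ℝ) : WithTop ℝ) (by rw [WithTop.coe_lt_coe]; linarith)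
  obtain ⟨N, hN⟩ := eventually_atTop.1 (h1.and h2)
  have a1 := (hN N le_rfl).1
  have a2 := (hN (N + 1) (by omega)).2
  rw [WithTop.coe_lt_coe] at a1 a2
  have a3 := hg (Nat.lt_succ_self N)
  have hne : s (N + 1) - s N ≠ 0 := by
    rw [← AddValuation.ne_top_iff v, hv]; exact WithTop.coe_ne_top
  refine ⟨(s (N + 1 + 1) - s (N + 1)) / (s (N + 1) - s N), g (N + 1) - g N, ?_,
    sub_pos.2 a3, by linarith⟩
  have e := congrArg v (div_mul_cancel₀ (s (N + 1 + 1) - s (N + 1)) hne)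
  rw [AddValuation.map_mul, hv, hv] at e
  generalize v ((s (N + 1 + 1) - s (N + 1)) / (s (N + 1) - s N)) = w at e ⊢
  induction w using WithTop.recTopCoe with
  | top => rw [WithTop.top_add] at e; exact absurd e WithTop.top_ne_coe
  | coe w =>
    norm_cast at e ⊢
    linarith

/-- The value group as an additive subgroup of the reals. -/
def valGrp (v : AddValuation K (WithTop ℝ)) : AddSubgroup ℝ where
  carrier := {r | ∃ x : K, v x = (r : WithTop ℝ)}
  zero_mem' := ⟨1, by simp⟩
  add_mem' := by
    rintro a b ⟨x, hx⟩ ⟨y, hy⟩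
    exact ⟨x * y, by rw [AddValuation.map_mul, hx, hy]; norm_cast⟩
  neg_mem' := by
    rintro a ⟨x, hx⟩
    have hne : x ≠ 0 := by
      rw [← AddValuation.ne_top_iff v, hx]; exact WithTop.coe_ne_top
    refine ⟨x⁻¹, ?_⟩
    have e := congrArg v (inv_mul_cancel₀ hne)
    rw [AddValuation.map_mul, hx, AddValuation.map_one] at e
    generalize v x⁻¹ = w at e ⊢
    induction w using WithTop.recTopCoe with
    | top => rw [WithTop.top_add] at e; exact absurd e WithTop.top_ne_zero
    | coe w =>
      norm_cast at e ⊢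
      linarith

lemma exists_seq {v : AddValuation K (WithTop ℝ)} {s : ℕ → K} (hs : IsPC v s) {δ' δ : WithTop ℝ}
    (hδ' : IsBreadth v s δ') (h : δ' < δ) (r : ℝ) (hr : (r : WithTop ℝ) < δ) :
    ∃ (γ : ℕ → ℝ) (c : ℕ → K), StrictMono γ ∧ (∀ m, v (c m) = (γ m : WithTop ℝ)) ∧
      (∀ m, r < γ m) ∧ OrdLim (fun m => (γ m : WithTop ℝ)) δ := by
  lift δ' to ℝ using ne_top_of_lt h
  have hsm := exists_small hs hδ'
  induction δ using WithTop.recTopCoe with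
  | top =>
    obtain ⟨u, e, hu, he, -⟩ := hsm 1 one_pos
    obtain ⟨N, hN⟩ := exists_nat_gt (r / e)
    rw [div_lt_iff₀ he] at hN
    have hpow : ∀ n : ℕ, v (u ^ n) = ((n * e : ℝ) : WithTop ℝ) := by
      intro n
      induction n with
      | zero => simp
      | succ n ih =>
        rw [pow_succ, AddValuation.map_mul, ih, hu, ← WithTop.coe_add]
        congr 1; push_cast; ring
    refine ⟨fun m => ((N + m : ℕ) : ℝ) * e, fun m => u ^ (N + m), ?_, fun m => hpow _, ?_, ?_⟩
    · intro i j hij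
      refine mul_lt_mul_of_pos_right ?_ he
      exact_mod_cast Nat.add_lt_add_left hij N
    · intro m
      refine hN.trans_le (mul_le_mul_of_nonneg_right ?_ he.le)
      exact_mod_cast Nat.le_add_right N m
    · refine ordLim_top (Tendsto.atTop_mul_const he ?_)
      refine tendsto_natCast_atTop_atTop.comp ?_
      exact tendsto_atTop_mono (fun m => Nat.le_add_left m N) tendsto_id
  | coe d =>
    rw [WithTop.coe_lt_coe] at hr
    have hdense : Dense ((valGrp v : AddSubgroup ℝ) : Set ℝ) := by
      refine AddSubgroup.dense_of_not_isolated_zero _ fun ε hε => ?_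
      obtain ⟨u, e, hu, h0, h1⟩ := hsm ε hε
      exact ⟨e, ⟨u, hu⟩, h0, h1⟩
    obtain ⟨γ, hγ, hmem, hlim⟩ := hdense.exists_seq_strictMono_tendsto_of_lt hr
    have : ∀ m, ∃ x : K, v x = (γ m : WithTop ℝ) := fun m => (hmem m).2
    choose c hc using this
    exact ⟨γ, c, hγ, hc, fun m => (hmem m).1.1, ordLim_coe hlim⟩

lemma zar_basis {L : Type*} [Field L] (U : Set (ValuationSubring L))
    (hU : @IsOpen _ (zarTop L) U) (W : ValuationSubring L) (hW : W ∈ U) :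
    ∃ T : Finset L, (∀ φ ∈ T, φ ∈ W) ∧ ∀ W' : ValuationSubring L, (∀ φ ∈ T, φ ∈ W') → W' ∈ U := by
  classical
  change GenerateOpen _ U at hU
  induction hU with
  | basic U h =>
    obtain ⟨φ, rfl⟩ := h
    exact ⟨{φ}, by simpa using hW, by simp⟩
  | univ => exact ⟨∅, by simp, by simp⟩
  | inter A B _ _ ihA ihB =>
    obtain ⟨T1, h1, h1'⟩ := ihA hW.1
    obtain ⟨T2, h2, h2'⟩ := ihB hW.2
    refine ⟨T1 ∪ T2, ?_, ?_⟩
    · intro φ hφ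
      rcases Finset.mem_union.1 hφ with h | h
      · exact h1 φ h
      · exact h2 φ h
    · intro W' h
      exact ⟨h1' W' fun φ hφ => h φ (Finset.mem_union_left _ hφ),
        h2' W' fun φ hφ => h φ (Finset.mem_union_right _ hφ)⟩
  | sUnion S _ ih =>
    obtain ⟨A, hA, hWA⟩ := hW
    obtain ⟨T, h1, h2⟩ := ih A hA hWA
    exact ⟨T, h1, fun W' h => ⟨A, hA, h2 W' h⟩⟩

/-- Main density step. -/
lemma exists_nearby {v : AddValuation K (WithTop ℝ)} {s : ℕ → K} (hs : IsPC v s) {δ' δ : WithTop ℝ}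
    (hδ' : IsBreadth v s δ') (h : δ' < δ) (T : Finset (RatFunc K))
    (hT : ∀ φ ∈ T, φ ∈ VESet v s) :
    ∃ W : ValuationSubring (RatFunc K), W ∈ VVδ v δ ∧ ∀ φ ∈ T, φ ∈ W := by
  obtain ⟨g, hg, hv⟩ := exists_real hs
  have hev : ∀ᶠ n in atTop, ∀ φ ∈ T, 0 ≤ v (RatFunc.eval (RingHom.id K) (s n) φ) ∧
      ∀ x, v (s (n + 1) - s n) < v (x - s n) → v (RatFunc.eval (RingHom.id K) x φ)
        = v (RatFunc.eval (RingHom.id K) (s n) φ) := by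
    rw [Filter.eventually_all_finset]
    intro φ hφ
    filter_upwards [hT φ hφ, eventually_const hs φ.num, eventually_const hs φ.denom]
      with n h1 h2 h3
    refine ⟨h1, fun x hx => ?_⟩
    simp only [RatFunc.eval, Polynomial.eval₂_id]
    rw [AddValuation.map_div, AddValuation.map_div, h2 x hx, h3 x hx]
  have hlt := hδ'.2 δ h
  obtain ⟨n, hn, hn2⟩ := (hev.and hlt).exists
  simp only [hv] at hn2
  obtain ⟨γ, c, hγ, hc, hr, hlim⟩ := exists_seq hs hδ' h (g n) hn2
  obtain ⟨W, hW⟩ := exists_valring hγ hc (s n)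
  have hd : ∀ m, v ((s n + c (m + 1)) - (s n + c m)) = (γ m : WithTop ℝ) := by
    intro m
    rw [add_sub_add_left_eq_sub, AddValuation.map_sub_eq_of_lt_right, hc]
    rw [hc, hc, WithTop.coe_lt_coe]
    exact hγ (Nat.lt_succ_self m)
  refine ⟨W, ⟨_, ?_, ?_, hW⟩, fun φ hφ => ?_⟩
  · intro m
    change v ((s n + c (m + 1)) - (s n + c m)) < v ((s n + c (m + 1 + 1)) - (s n + c (m + 1)))
    rw [hd, hd, WithTop.coe_lt_coe]
    exact hγ (Nat.lt_succ_self m)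
  · simp only [IsBreadth, hd]
    exact hlim
  · rw [← SetLike.mem_coe, hW]
    refine Eventually.of_forall fun m => ?_
    rw [(hn φ hφ).2]
    · exact (hn φ hφ).1
    · rw [hv, add_sub_cancel_left, hc, WithTop.coe_lt_coe]
      exact hr m

lemma eval_lin (a b x : K) :
    RatFunc.eval (RingHom.id K) x
      (algebraMap K[X] (RatFunc K) (Polynomial.C b⁻¹ * (Polynomial.X - Polynomial.C a)))
      = b⁻¹ * (x - a) := by
  rw [RatFunc.eval_algebraMap]
  simp

lemma val_lin {v : AddValuation K (WithTop ℝ)} {b : K} (hb : b ≠ 0) (y : K) :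
    0 ≤ v (b⁻¹ * y) ↔ v b ≤ v y := by
  have e : y = b * (b⁻¹ * y) := by rw [mul_inv_cancel_left₀ hb]
  conv_rhs => rw [e, AddValuation.map_mul]
  generalize v (b⁻¹ * y) = w
  obtain ⟨r, hr⟩ := WithTop.ne_top_iff_exists.1 ((AddValuation.ne_top_iff v).2 hb)
  rw [← hr]
  induction w using WithTop.recTopCoe with
  | top => simp
  | coe w =>
    norm_cast
    constructor <;> intro h <;> linarith

/-- The closure of `𝒱(•,δ)` in `𝒱` (Zariski topology) is
`⋃_{δ' ≤ δ} 𝒱(•,δ')`. -/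
theorem statement5 (v : AddValuation K (WithTop ℝ)) (hv : IsRankOne v)
    (δ : WithTop ℝ) :
    @closure _ (zarSub (VV v))
        {W : ↥(VV v) | (W : ValuationSubring (RatFunc K)) ∈ VVδ v δ} =
      {W : ↥(VV v) | ∃ δ' : WithTop ℝ, δ' ≤ δ ∧
        (W : ValuationSubring (RatFunc K)) ∈ VVδ v δ'} := by
  letI := zarSub (VV v)
  ext W
  rw [mem_closure_iff]
  constructor
  · intro hcl
    obtain ⟨s, hs, hW⟩ := W.2
    obtain ⟨δ', hδ'⟩ := exists_breadth hs
    refine ⟨δ', ?_, s, hs, hδ', hW⟩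
    by_contra hlt
    rw [not_le] at hlt
    obtain ⟨n, hn⟩ := (hδ'.1 δ hlt).exists
    have hne : s (n + 1) - s n ≠ 0 := by
      rw [← AddValuation.ne_top_iff v]; exact ne_top_of_lt (hs n)
    obtain ⟨φ, hφ⟩ : ∃ φ : RatFunc K, ∀ x : K,
        0 ≤ v (RatFunc.eval (RingHom.id K) x φ) ↔ v (s (n + 1) - s n) ≤ v (x - s n) :=
      ⟨_, fun x => by rw [eval_lin (s n) (s (n + 1) - s n) x]; exact val_lin hne _⟩
    have hopen : IsOpen {A : ↥(VV v) | φ ∈ (A : ValuationSubring (RatFunc K))} := by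
      refine ⟨{A | φ ∈ A}, GenerateOpen.basic _ ⟨φ, rfl⟩, rfl⟩
    obtain ⟨A, hA1, t, ht, htb, hA⟩ := hcl _ hopen (by
      change φ ∈ (W : ValuationSubring (RatFunc K))
      rw [← SetLike.mem_coe, hW]
      change ∀ᶠ m in atTop, 0 ≤ v (RatFunc.eval (RingHom.id K) (s m) φ)
      filter_upwards [eventually_gt_atTop n] with m hm
      rw [hφ, pc_dist' hs hm])
    change φ ∈ (A : ValuationSubring (RatFunc K)) at hA1
    rw [← SetLike.mem_coe, hA] at hA1
    change ∀ᶠ m in atTop, 0 ≤ v (RatFunc.eval (RingHom.id K) (t m) φ) at hA1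
    obtain ⟨N, hN⟩ := eventually_atTop.1 (hA1.and (htb.2 _ hn))
    have h1 := (hφ _).1 (hN N le_rfl).1
    have h2 := (hφ _).1 (hN (N + 1) (by omega)).1
    have h3 := AddValuation.map_le_sub v h2 h1
    rw [sub_sub_sub_cancel_right] at h3
    exact absurd (hN N le_rfl).2 (not_lt.2 h3)
  · rintro ⟨δ', hle, s, hs, hδ', hW⟩ o ho hWo
    rcases hle.eq_or_lt with rfl | hlt
    · exact ⟨W, hWo, s, hs, hδ', hW⟩
    · obtain ⟨U, hU, rfl⟩ := ho
      obtain ⟨T, hT, hT'⟩ := zar_basis U hU _ hWo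
      obtain ⟨A, hA, hAT⟩ := exists_nearby hs hδ' hlt T (fun φ hφ => by
        have := hT φ hφ
        rwa [← SetLike.mem_coe, hW] at this)
      have hA' := hA
      obtain ⟨t, ht, -, htA⟩ := hA'
      exact ⟨⟨A, t, ht, htA⟩, hT' A hAT, hA⟩

end PaperPCZar
end
end

section
/- Suppose V is not discrete, let β ∈ K̄ and let u be a fixed extension of v to K̄. Then the map Σ_β : 𝒱(β,•) → (−∞, δ(β,K)], V_E ↦ δ_E, is a homeomorphism between 𝒱(β,•) endowed with the (subspace) Zariski topology and the interval (−∞, δ(β,K)] endowed with the ℚΓ_v-upper limit topology. -/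
open Filter Topology TopologicalSpace Set Polynomial

noncomputable section

namespace PaperPCZar

variable {K : Type*} [Field K]

section helpers

variable {L : Type*} [Field L]

theorem aval_div (v : AddValuation L (WithTop ℝ)) {x y : L} {a b : ℝ}
    (hx : v x = (a : WithTop ℝ)) (hy : v y = (b : WithTop ℝ)) :
    v (x / y) = ((a - b : ℝ) : WithTop ℝ) := by
  rw [AddValuation.map_div, hx, hy]
  exact (WithTop.LinearOrderedAddCommGroup.coe_sub a b).symm

theorem aval_mul (v : AddValuation L (WithTop ℝ)) {x y : L} {a b : ℝ}
    (hx : v x = (a : WithTop ℝ)) (hy : v y = (b : WithTop ℝ)) :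
    v (x * y) = ((a + b : ℝ) : WithTop ℝ) := by
  rw [AddValuation.map_mul, hx, hy]; rfl

theorem aval_pow (v : AddValuation L (WithTop ℝ)) {x : L} {a : ℝ}
    (hx : v x = (a : WithTop ℝ)) (n : ℕ) :
    v (x ^ n) = ((n * a : ℝ) : WithTop ℝ) := by
  induction n with
  | zero => simp
  | succ k ih =>
    rw [pow_succ, aval_mul v ih hx]; exact congrArg WithTop.some (by push_cast; ring)

theorem aval_real (v : AddValuation L (WithTop ℝ)) {x : L} (hx : x ≠ 0) :
    ∃ a : ℝ, v x = (a : WithTop ℝ) := by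
  have := (AddValuation.ne_top_iff v).2 hx
  exact ⟨(v x).untop this, by simp⟩

theorem aval_ne (v : AddValuation L (WithTop ℝ)) {x : L} {a : ℝ} 
    (hx : v x = (a : WithTop ℝ)) : x ≠ 0 := by
  rw [← AddValuation.ne_top_iff v, hx]; exact WithTop.coe_ne_top

theorem vg_sub {v : AddValuation L (WithTop ℝ)} {a b : ℝ} (ha : a ∈ valueGroup v)
    (hb : b ∈ valueGroup v) : a - b ∈ valueGroup v := by
  obtain ⟨x, hx⟩ := ha
  obtain ⟨y, hy⟩ := hb
  exact ⟨x / y, aval_div v hx hy⟩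

theorem vg_zero (v : AddValuation L (WithTop ℝ)) : (0:ℝ) ∈ valueGroup v := ⟨1, by simp⟩

theorem vg_neg {v : AddValuation L (WithTop ℝ)} {a : ℝ} (ha : a ∈ valueGroup v) :
    -a ∈ valueGroup v := by simpa using vg_sub (vg_zero v) ha

theorem vg_nat {v : AddValuation L (WithTop ℝ)} {a : ℝ} (ha : a ∈ valueGroup v) (n : ℕ) :
    n * a ∈ valueGroup v := by
  obtain ⟨x, hx⟩ := ha
  exact ⟨x ^ n, aval_pow v hx n⟩

theorem vg_int {v : AddValuation L (WithTop ℝ)} {a : ℝ} (ha : a ∈ valueGroup v) (n : ℤ) :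
    n * a ∈ valueGroup v := by
  obtain ⟨m, rfl | rfl⟩ := n.eq_nat_or_neg
  · simpa using vg_nat ha m
  · simpa using vg_neg (vg_nat ha m)

theorem qg_iff {v : AddValuation L (WithTop ℝ)} {r : ℝ} :
    r ∈ QGamma v ↔ ∃ m : ℕ, 0 < m ∧ m * r ∈ valueGroup v := by
  constructor
  · rintro ⟨q, γ, hγ, rfl⟩
    refine ⟨q.den, q.pos, ?_⟩
    have : (q.den : ℝ) * (q * γ) = (q.num : ℝ) * γ := by
      rw [← mul_assoc]; congr 1
      exact_mod_cast Rat.den_mul_eq_num q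
    rw [this]; exact vg_int hγ _
  · rintro ⟨m, hm, h⟩
    refine ⟨1 / m, _, h, ?_⟩
    have : (m : ℝ) ≠ 0 := by positivity
    push_cast; field_simp

theorem qg_sub {v : AddValuation L (WithTop ℝ)} {a b : ℝ} (ha : a ∈ QGamma v)
    (hb : b ∈ QGamma v) : a - b ∈ QGamma v := by
  rw [qg_iff] at *
  obtain ⟨m, hm, h⟩ := ha
  obtain ⟨n, hn, h'⟩ := hb
  refine ⟨m * n, by positivity, ?_⟩
  have := vg_sub (vg_nat h n) (vg_nat h' m)
  convert this using 1
  push_cast; ring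

theorem qg_mul {v : AddValuation L (WithTop ℝ)} {a : ℝ} (ha : a ∈ QGamma v) (q : ℚ) :
    q * a ∈ QGamma v := by
  obtain ⟨q', γ, hγ, rfl⟩ := ha
  exact ⟨q * q', γ, hγ, by push_cast; ring⟩

theorem qg_vg {v : AddValuation L (WithTop ℝ)} {a : ℝ} (ha : a ∈ valueGroup v) :
    a ∈ QGamma v := ⟨1, a, ha, by simp⟩

theorem qg_zero (v : AddValuation L (WithTop ℝ)) : (0:ℝ) ∈ QGamma v := qg_vg (vg_zero v)

theorem qg_add {v : AddValuation L (WithTop ℝ)} {a b : ℝ} (ha : a ∈ QGamma v)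
    (hb : b ∈ QGamma v) : a + b ∈ QGamma v := by
  have := qg_sub ha (qg_mul hb (-1))
  simpa using this

theorem qg_of_u (v : AddValuation K (WithTop ℝ))
    (u : AddValuation (AlgebraicClosure K) (WithTop ℝ))
    (hu : ∀ x : K, u (algebraMap K (AlgebraicClosure K) x) = v x)
    {α : AlgebraicClosure K} {r : ℝ} (hr : u α = (r : WithTop ℝ)) : r ∈ QGamma v := by
  classical
  have hα : IsAlgebraic K α := Algebra.IsAlgebraic.isAlgebraic α
  obtain ⟨p, hp0, hp⟩ := hα
  set f : ℕ → AlgebraicClosure K := fun i => algebraMap K _ (p.coeff i) * α ^ i with hf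
  have hsum : ∑ i ∈ p.support, f i = 0 := by
    rw [← hp, Polynomial.aeval_def, Polynomial.eval₂_eq_sum, Polynomial.sum_def]
  have hval : ∀ i ∈ p.support, ∃ g ∈ valueGroup v, u (f i) = ((g + i * r : ℝ) : WithTop ℝ) := by
    intro i hi
    obtain ⟨g, hg⟩ := aval_real v (Polynomial.mem_support_iff.1 hi)
    refine ⟨g, ⟨_, hg⟩, ?_⟩
    exact aval_mul u ((hu _).trans hg) (aval_pow u hr i)
  have key : ∃ i ∈ p.support, ∃ j ∈ p.support, i ≠ j ∧ u (f i) = u (f j) := by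
    by_contra! hcon
    obtain ⟨j, hj, hmin⟩ := Finset.exists_min_image p.support (fun i => u (f i))
      (Polynomial.support_nonempty.2 hp0)
    obtain ⟨g, _, hg⟩ := hval j hj
    have h1 : u (f j) < u (∑ i ∈ p.support.erase j, f i) := by
      apply AddValuation.map_lt_sum u
      · rw [hg]; exact WithTop.coe_ne_top
      · intro i hi
        rw [Finset.mem_erase] at hi
        exact lt_of_le_of_ne (hmin i hi.2) (hcon j hj i hi.2 hi.1.symm)
    have h2 := AddValuation.map_add_eq_of_lt_left u h1
    rw [Finset.add_sum_erase _ _ hj, hsum, hg, AddValuation.map_zero] at h2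
    exact WithTop.coe_ne_top h2.symm
  obtain ⟨i, hi, j, hj, hij, he⟩ := key
  obtain ⟨g, hg, h1⟩ := hval i hi
  obtain ⟨g', hg', h2⟩ := hval j hj
  rw [h1, h2] at he
  have he' : g + i * r = g' + j * r := WithTop.coe_injective he
  refine ⟨1 / ((j : ℚ) - i), g - g', vg_sub hg hg', ?_⟩
  have : (j : ℝ) - i ≠ 0 := sub_ne_zero.2 (by exact_mod_cast hij.symm)
  push_cast
  field_simp
  linarith

/-- `δ` is in `Λ ∪ {∞}` or else there is room to the right. -/
def Germ (v : AddValuation K (WithTop ℝ)) (u : AddValuation (AlgebraicClosure K) (WithTop ℝ))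
    (β : AlgebraicClosure K) (δ : WithTop ℝ) (P : K → ℝ → ℝ → ℤ → Prop) : Prop :=
  ∃ (α : ℝ) (lam : WithTop ℝ) (a : ℝ) (k : ℤ), (α : WithTop ℝ) < δ ∧ δ ≤ lam ∧
    (δ = ⊤ ∨ (∃ r ∈ QGamma v, δ = (r : WithTop ℝ)) ∨ δ < lam) ∧ a ∈ QGamma v ∧
    ∀ (y : K) (x : ℝ), u (β - algebraMap K _ y) = (x : WithTop ℝ) → α < x →
      (x : WithTop ℝ) < lam → P y x a k

theorem exists_real_lt (δ : WithTop ℝ) : ∃ a : ℝ, (a : WithTop ℝ) < δ := by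
  induction δ with
  | top => exact ⟨0, WithTop.coe_lt_top _⟩
  | coe d => exact ⟨d - 1, by exact_mod_cast sub_one_lt d⟩

theorem Germ.combine {v : AddValuation K (WithTop ℝ)}
    {u : AddValuation (AlgebraicClosure K) (WithTop ℝ)}
    {β : AlgebraicClosure K} {δ : WithTop ℝ} {P Q R : K → ℝ → ℝ → ℤ → Prop} (e : ℤ)
    (hP : Germ v u β δ P) (hQ : Germ v u β δ Q)
    (h : ∀ y x a k b l, P y x a k → Q y x b l → R y x (a + e * b) (k + e * l)) :
    Germ v u β δ R := by
  obtain ⟨α, lam, a, k, h1, h2, h3, h4, h5⟩ := hP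
  obtain ⟨α', lam', a', k', h1', h2', h3', h4', h5'⟩ := hQ
  refine ⟨max α α', min lam lam', a + e * a', k + e * k', ?_, le_min h2 h2', ?_, ?_, ?_⟩
  · rcases max_choice α α' with h | h <;> rw [h] <;> assumption
  · rcases h3 with h3 | h3 | h3
    · exact Or.inl h3
    · exact Or.inr (Or.inl h3)
    · rcases h3' with h3' | h3' | h3'
      · exact Or.inl h3'
      · exact Or.inr (Or.inl h3')
      · exact Or.inr (Or.inr (lt_min h3 h3'))
  · have := qg_mul h4' (e : ℚ)
    push_cast at this
    exact qg_add h4 this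
  · intro y x hx hα hl
    exact h _ _ _ _ _ _ (h5 y x hx ((le_max_left _ _).trans_lt hα) (hl.trans_le (min_le_left _ _)))
      (h5' y x hx ((le_max_right _ _).trans_lt hα) (hl.trans_le (min_le_right _ _)))

theorem germ_root (v : AddValuation K (WithTop ℝ))
    (u : AddValuation (AlgebraicClosure K) (WithTop ℝ))
    (hu : ∀ x : K, u (algebraMap K (AlgebraicClosure K) x) = v x)
    (β : AlgebraicClosure K) (δ : WithTop ℝ) (α : AlgebraicClosure K) :
    Germ v u β δ (fun y x a k => u (algebraMap K _ y - α) = ((a + k * x : ℝ) : WithTop ℝ)) := by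
  have hsp : ∀ y : K, algebraMap K (AlgebraicClosure K) y - α
      = (β - α) - (β - algebraMap K _ y) := by intro y; ring
  by_cases hlt : u (β - α) < δ
  · obtain ⟨g, hg⟩ := WithTop.ne_top_iff_exists.1 hlt.ne_top
    rw [← hg] at hlt
    refine ⟨g, ⊤, g, 0, hlt, le_top, ?_, qg_of_u v u hu hg.symm, ?_⟩
    · rcases eq_or_ne δ ⊤ with h | h
      · exact Or.inl h
      · exact Or.inr (Or.inr (lt_top_iff_ne_top.2 h))
    · intro y x hx h1 _
      rw [hsp, AddValuation.map_sub_eq_of_lt_left, ← hg]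
      · simp
      · rw [← hg, hx]; exact_mod_cast h1
  · push Not at hlt
    obtain ⟨c, hc⟩ := exists_real_lt δ
    refine ⟨c, u (β - α), 0, 1, hc, hlt, ?_, qg_zero v, ?_⟩
    · rcases hlt.eq_or_lt with h | h
      · rcases eq_or_ne δ ⊤ with h' | h'
        · exact Or.inl h'
        · obtain ⟨d, hd⟩ := WithTop.ne_top_iff_exists.1 h'
          refine Or.inr (Or.inl ⟨d, qg_of_u v u hu (h.symm.trans hd.symm), hd.symm⟩)
      · exact Or.inr (Or.inr h)
    · intro y x hx _ h2
      rw [hsp, AddValuation.map_sub_eq_of_lt_right, hx]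
      · simp
      · rwa [hx]

theorem germ_const (v : AddValuation K (WithTop ℝ))
    (u : AddValuation (AlgebraicClosure K) (WithTop ℝ))
    (β : AlgebraicClosure K) (δ : WithTop ℝ) {a : ℝ} (ha : a ∈ QGamma v)
    {P : K → ℝ → ℝ → ℤ → Prop} (h : ∀ y x, P y x a 0) : Germ v u β δ P := by
  obtain ⟨c, hc⟩ := exists_real_lt δ
  refine ⟨c, ⊤, a, 0, hc, le_top, ?_, ha, fun y x _ _ _ => h y x⟩
  rcases eq_or_ne δ ⊤ with h | h
  · exact Or.inl h
  · exact Or.inr (Or.inr (lt_top_iff_ne_top.2 h))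

theorem germ_poly (v : AddValuation K (WithTop ℝ))
    (u : AddValuation (AlgebraicClosure K) (WithTop ℝ))
    (hu : ∀ x : K, u (algebraMap K (AlgebraicClosure K) x) = v x)
    (β : AlgebraicClosure K) (δ : WithTop ℝ) (p : K[X]) (hp : p ≠ 0) :
    Germ v u β δ (fun y x a k => v (p.eval y) = ((a + k * x : ℝ) : WithTop ℝ)) := by
  have hsplit := IsAlgClosed.splits (p.map (algebraMap K (AlgebraicClosure K)))
  have hms : ∀ m : Multiset (AlgebraicClosure K), Germ v u β δ (fun y x a k =>
      u ((m.map (fun α => algebraMap K _ y - α)).prod) = ((a + k * x : ℝ) : WithTop ℝ)) := by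
    intro m
    induction m using Multiset.induction with
    | empty => exact germ_const v u β δ (qg_zero v) (by intro y x; simp)
    | cons α m ih =>
      refine (germ_root v u hu β δ α).combine 1 ih ?_
      intro y x a k b l h1 h2
      rw [Multiset.map_cons, Multiset.prod_cons, aval_mul u h1 h2]
      exact congrArg WithTop.some (by push_cast; ring)
  have hlc : (p.map (algebraMap K (AlgebraicClosure K))).leadingCoeff ≠ 0 := by
    simpa using hp
  obtain ⟨c, hc⟩ := aval_real u hlc
  have hcst : Germ v u β δ (fun y x a k =>
      u ((p.map (algebraMap K (AlgebraicClosure K))).leadingCoeff) 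
        = ((a + k * x : ℝ) : WithTop ℝ)) :=
    germ_const v u β δ (qg_of_u v u hu hc) (by intro y x; simpa using hc)
  refine hcst.combine 1 (hms (p.map (algebraMap K (AlgebraicClosure K))).roots) ?_
  intro y x a k b l h1 h2
  have := hsplit.eval_eq_prod_roots (algebraMap K _ y)
  rw [Polynomial.eval_map_algebraMap, Polynomial.aeval_algebraMap_apply] at this
  rw [← hu, ← Polynomial.coe_aeval_eq_eval, this, aval_mul u h1 h2]
  exact congrArg WithTop.some (by push_cast; ring)

/-- Value of a rational function near `δ`. -/
theorem germ_rat (v : AddValuation K (WithTop ℝ))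
    (u : AddValuation (AlgebraicClosure K) (WithTop ℝ))
    (hu : ∀ x : K, u (algebraMap K (AlgebraicClosure K) x) = v x)
    (β : AlgebraicClosure K) (δ : WithTop ℝ) (φ : RatFunc K) (hφ : φ ≠ 0) :
    Germ v u β δ (fun y x a k => φ.denom.eval₂ (RingHom.id K) y ≠ 0 ∧ 
      v (RatFunc.eval (RingHom.id K) y φ) = ((a + k * x : ℝ) : WithTop ℝ)) := by
  refine (germ_poly v u hu β δ φ.num (RatFunc.num_ne_zero hφ)).combine (-1) 
    (germ_poly v u hu β δ φ.denom (RatFunc.denom_ne_zero φ)) ?_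
  intro y x a k b l h1 h2
  refine ⟨aval_ne v h2, ?_⟩
  unfold RatFunc.eval
  erw [aval_div v h1 h2]
  exact congrArg WithTop.some (by push_cast; ring)


/-- `P` holds at all `y ∈ K` with `u (β - y) < δ` close to `δ`. -/
def Ev (u : AddValuation (AlgebraicClosure K) (WithTop ℝ))
    (β : AlgebraicClosure K) (δ : WithTop ℝ) (P : K → ℝ → Prop) : Prop :=
  ∃ α : ℝ, (α : WithTop ℝ) < δ ∧ ∀ (y : K) (x : ℝ),
    u (β - algebraMap K _ y) = (x : WithTop ℝ) → α < x → (x : WithTop ℝ) < δ → P y x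

theorem Ev.and {u : AddValuation (AlgebraicClosure K) (WithTop ℝ)}
    {β : AlgebraicClosure K} {δ : WithTop ℝ} {P Q : K → ℝ → Prop}
    (hP : Ev u β δ P) (hQ : Ev u β δ Q) : Ev u β δ (fun y x => P y x ∧ Q y x) := by
  obtain ⟨α, h1, h2⟩ := hP
  obtain ⟨α', h1', h2'⟩ := hQ
  refine ⟨max α α', ?_, fun y x hx ha hd => 
    ⟨h2 y x hx ((le_max_left _ _).trans_lt ha) hd, h2' y x hx ((le_max_right _ _).trans_lt ha) hd⟩⟩
  rcases max_choice α α' with h | h <;> rw [h] <;> assumption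

theorem Ev.mono {u : AddValuation (AlgebraicClosure K) (WithTop ℝ)}
    {β : AlgebraicClosure K} {δ : WithTop ℝ} {P Q : K → ℝ → Prop}
    (hP : Ev u β δ P) (h : ∀ y x, P y x → Q y x) : Ev u β δ Q := by
  obtain ⟨α, h1, h2⟩ := hP
  exact ⟨α, h1, fun y x hx ha hd => h _ _ (h2 y x hx ha hd)⟩

theorem Ev.of_all (u : AddValuation (AlgebraicClosure K) (WithTop ℝ))
    (β : AlgebraicClosure K) (δ : WithTop ℝ) {P : K → ℝ → Prop} 
    (h : ∀ y x, P y x) : Ev u β δ P := by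
  obtain ⟨c, hc⟩ := exists_real_lt δ
  exact ⟨c, hc, fun y x _ _ _ => h y x⟩

theorem Germ.ev {v : AddValuation K (WithTop ℝ)}
    {u : AddValuation (AlgebraicClosure K) (WithTop ℝ)}
    {β : AlgebraicClosure K} {δ : WithTop ℝ} {P : K → ℝ → ℝ → ℤ → Prop}
    (hP : Germ v u β δ P) : ∃ (a : ℝ) (k : ℤ), Ev u β δ (fun y x => P y x a k) := by
  obtain ⟨α, lam, a, k, h1, h2, h3, h4, h5⟩ := hP
  exact ⟨a, k, α, h1, fun y x hx ha hd => h5 y x hx ha (hd.trans_le h2)⟩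

/-- The candidate for `V_E` with breadth `δ`. -/
def SS (v : AddValuation K (WithTop ℝ)) (u : AddValuation (AlgebraicClosure K) (WithTop ℝ))
    (β : AlgebraicClosure K) (δ : WithTop ℝ) : Set (RatFunc K) :=
  {φ | Ev u β δ (fun y _ => 0 ≤ v (RatFunc.eval (RingHom.id K) y φ))}

theorem sign_lin (a k : ℝ) (δ : WithTop ℝ) : ∃ c : ℝ, (c : WithTop ℝ) < δ ∧
    ((∀ x : ℝ, c < x → (x : WithTop ℝ) < δ → 0 ≤ a + k * x) ∨
      (∀ x : ℝ, c < x → (x : WithTop ℝ) < δ → a + k * x ≤ 0)) := by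
  obtain ⟨c, hc⟩ := exists_real_lt δ
  rcases eq_or_ne k 0 with rfl | hk
  · refine ⟨c, hc, ?_⟩
    rcases le_total 0 a with h | h
    · left; intros; simpa using h
    · right; intros; simpa using h
  by_cases hr : ((-a / k : ℝ) : WithTop ℝ) < δ
  · refine ⟨-a / k, hr, ?_⟩
    rcases lt_or_gt_of_ne hk with h | h
    · right; intro x hx _
      have h1 : a + k * x = k * (x - -a / k) := by field_simp; ring
      rw [h1]; exact mul_nonpos_of_nonpos_of_nonneg h.le (by linarith)
    · left; intro x hx _
      have h1 : a + k * x = k * (x - -a / k) := by field_simp; ring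
      rw [h1]; exact mul_nonneg h.le (by linarith)
  · push Not at hr
    refine ⟨c, hc, ?_⟩
    have key : ∀ x : ℝ, (x : WithTop ℝ) < δ → x < -a / k := fun x hx => by
      exact_mod_cast hx.trans_le hr
    rcases lt_or_gt_of_ne hk with h | h
    · left; intro x _ hx
      have h1 : a + k * x = k * (x - -a / k) := by field_simp; ring
      rw [h1]; exact mul_nonneg_of_nonpos_of_nonpos h.le (by linarith [key x hx])
    · right; intro x _ hx
      have h1 : a + k * x = k * (x - -a / k) := by field_simp; ring
      rw [h1]; exact mul_nonpos_of_nonneg_of_nonpos h.le (by linarith [key x hx])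

theorem ev_den (v : AddValuation K (WithTop ℝ))
    (u : AddValuation (AlgebraicClosure K) (WithTop ℝ))
    (hu : ∀ x : K, u (algebraMap K (AlgebraicClosure K) x) = v x)
    (β : AlgebraicClosure K) (δ : WithTop ℝ) (φ : RatFunc K) :
    Ev u β δ (fun y _ => φ.denom.eval₂ (RingHom.id K) y ≠ 0) := by
  rcases eq_or_ne φ 0 with rfl | h
  · exact Ev.of_all u β δ (by intro y x; simp)
  · obtain ⟨a, k, h⟩ := (germ_rat v u hu β δ φ h).ev
    exact h.mono (fun y x h => h.1)

theorem ev_inv (v : AddValuation K (WithTop ℝ))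
    (u : AddValuation (AlgebraicClosure K) (WithTop ℝ))
    (hu : ∀ x : K, u (algebraMap K (AlgebraicClosure K) x) = v x)
    (β : AlgebraicClosure K) (δ : WithTop ℝ) (φ : RatFunc K) (hφ : φ ≠ 0) :
    Ev u β δ (fun y _ => RatFunc.eval (RingHom.id K) y φ ≠ 0 ∧
      RatFunc.eval (RingHom.id K) y φ⁻¹ = (RatFunc.eval (RingHom.id K) y φ)⁻¹) := by
  refine ((ev_den v u hu β δ φ).and (ev_den v u hu β δ φ⁻¹)).mono ?_
  rintro y x ⟨h1, h2⟩
  have := RatFunc.eval_mul (RingHom.id K) y h1 h2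
  rw [mul_inv_cancel₀ hφ, RatFunc.eval_one] at this
  have h0 : RatFunc.eval (RingHom.id K) y φ ≠ 0 := by
    intro h; rw [h, zero_mul] at this; exact one_ne_zero this
  exact ⟨h0, eq_inv_of_mul_eq_one_right this.symm⟩

theorem zero_mem_SS (v : AddValuation K (WithTop ℝ))
    (u : AddValuation (AlgebraicClosure K) (WithTop ℝ))
    (β : AlgebraicClosure K) (δ : WithTop ℝ) : (0 : RatFunc K) ∈ SS v u β δ :=
  Ev.of_all u β δ (by intro y x; simp)

/-- `SS` is a valuation ring. -/
def RR (v : AddValuation K (WithTop ℝ))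
    (u : AddValuation (AlgebraicClosure K) (WithTop ℝ))
    (hu : ∀ x : K, u (algebraMap K (AlgebraicClosure K) x) = v x)
    (β : AlgebraicClosure K) (δ : WithTop ℝ) : ValuationSubring (RatFunc K) :=
  have hmul : ∀ {a b : RatFunc K}, a ∈ SS v u β δ → b ∈ SS v u β δ → a * b ∈ SS v u β δ := by
    intro φ ψ h1 h2
    refine (((ev_den v u hu β δ φ).and (ev_den v u hu β δ ψ)).and (Ev.and h1 h2)).mono ?_
    rintro y x ⟨⟨h1, h2⟩, h3, h4⟩
    rw [RatFunc.eval_mul _ _ h1 h2, AddValuation.map_mul]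
    exact add_nonneg h3 h4
  { carrier := SS v u β δ
    mul_mem' := hmul
    one_mem' := Ev.of_all u β δ (by intro y x; simp)
    add_mem' := by
      intro φ ψ h1 h2
      refine (((ev_den v u hu β δ φ).and (ev_den v u hu β δ ψ)).and (Ev.and h1 h2)).mono ?_
      rintro y x ⟨⟨h1, h2⟩, h3, h4⟩
      rw [RatFunc.eval_add _ _ h1 h2]
      exact AddValuation.map_le_add v h3 h4
    zero_mem' := zero_mem_SS v u β δ
    neg_mem' := by
      intro φ h1
      have : -φ = RatFunc.C (-1) * φ := by simp
      rw [this]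
      refine hmul (Ev.of_all u β δ ?_) h1
      intro y x
      rw [RatFunc.eval_C]; simp
    mem_or_inv_mem' := by
      intro φ
      rcases eq_or_ne φ 0 with rfl | h
      · exact Or.inl (zero_mem_SS v u β δ)
      obtain ⟨a, k, h2⟩ := (germ_rat v u hu β δ φ h).ev
      obtain ⟨c, hc, h3 | h3⟩ := sign_lin a k δ
      · left
        have h4 : Ev u β δ (fun _ x => 0 ≤ a + k * x) := ⟨c, hc, fun y x _ h h' => h3 x h h'⟩
        refine (h2.and h4).mono ?_
        rintro y x ⟨⟨_, h5⟩, h6⟩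
        rw [h5]; exact_mod_cast h6
      · right
        have h4 : Ev u β δ (fun _ x => a + k * x ≤ 0) := ⟨c, hc, fun y x _ h h' => h3 x h h'⟩
        refine ((ev_inv v u hu β δ φ h).and (h2.and h4)).mono ?_
        rintro y x ⟨⟨_, h7⟩, ⟨_, h5⟩, h6⟩
        rw [h7, inv_eq_one_div, aval_div v (a := 0) (by simp) h5]
        have : 0 ≤ 0 - (a + k * x) := by linarith
        exact_mod_cast this }

theorem dens (v : AddValuation K (WithTop ℝ))
    (hnd : Dense (valueGroup v))
    (u : AddValuation (AlgebraicClosure K) (WithTop ℝ))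
    (hu : ∀ x : K, u (algebraMap K (AlgebraicClosure K) x) = v x)
    (β : AlgebraicClosure K) (δβK : WithTop ℝ)
    (hδβK : IsLUB {γ : WithTop ℝ | ∃ x : K,
      γ = u (β - algebraMap K (AlgebraicClosure K) x)} δβK)
    {a : ℝ} {δ : WithTop ℝ} (ha : (a : WithTop ℝ) < δ) (hδ : δ ≤ δβK) :
    ∃ (y : K) (x : ℝ), x ∈ valueGroup v ∧ u (β - algebraMap K _ y) = (x : WithTop ℝ) ∧
      a < x ∧ (x : WithTop ℝ) < δ := by
  obtain ⟨_, ⟨z, rfl⟩, hz⟩ := (lt_isLUB_iff hδβK).1 (ha.trans_le hδ)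
  obtain ⟨b, hb1, hb2⟩ := exists_between (lt_min ha hz)
  obtain ⟨b, rfl⟩ := WithTop.ne_top_iff_exists.1 hb2.ne_top
  obtain ⟨g, hg, h1, h2⟩ := hnd.exists_between (WithTop.coe_lt_coe.1 hb1)
  obtain ⟨t, ht⟩ := id hg
  have h2' : (g : WithTop ℝ) < min δ (u (β - algebraMap K _ z)) :=
    (WithTop.coe_lt_coe.2 h2).trans hb2
  refine ⟨z + t, g, hg, ?_, h1, h2'.trans_le (min_le_left _ _)⟩
  have : β - algebraMap K (AlgebraicClosure K) (z + t)
      = (β - algebraMap K _ z) - algebraMap K _ t := by rw [_root_.map_add]; ring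
  rw [this, AddValuation.map_sub_eq_of_lt_right, hu, ht]
  rw [hu, ht]
  exact h2'.trans_le (min_le_right _ _)

theorem SS_real (v : AddValuation K (WithTop ℝ))
    (hnd : Dense (valueGroup v))
    (u : AddValuation (AlgebraicClosure K) (WithTop ℝ))
    (hu : ∀ x : K, u (algebraMap K (AlgebraicClosure K) x) = v x)
    (β : AlgebraicClosure K) (δβK : WithTop ℝ)
    (hδβK : IsLUB {γ : WithTop ℝ | ∃ x : K,
      γ = u (β - algebraMap K (AlgebraicClosure K) x)} δβK)
    {δ : WithTop ℝ} (hδ : δ ≤ δβK) {a k : ℝ} (h : Ev u β δ (fun _ x => 0 ≤ a + k * x)) :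
    ∃ c : ℝ, (c : WithTop ℝ) < δ ∧ ∀ x : ℝ, c < x → (x : WithTop ℝ) < δ → 0 ≤ a + k * x := by
  obtain ⟨c, hc, h⟩ := h
  refine ⟨c, hc, fun x h1 h2 => ?_⟩
  rcases le_total 0 k with hk | hk
  · obtain ⟨y, x', _, h3, h4, h5⟩ := dens v hnd u hu β δβK hδβK (WithTop.coe_lt_coe.2 h1)
      (h2.le.trans hδ)
    have := h y x' h3 h4 (h5.trans h2)
    have h6 : x' < x := WithTop.coe_lt_coe.1 h5
    nlinarith
  · obtain ⟨y, x', _, h3, h4, h5⟩ := dens v hnd u hu β δβK hδβK h2 hδ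
    have := h y x' h3 (h1.trans h4) h5
    nlinarith

theorem SS_open (v : AddValuation K (WithTop ℝ))
    (hnd : Dense (valueGroup v))
    (u : AddValuation (AlgebraicClosure K) (WithTop ℝ))
    (hu : ∀ x : K, u (algebraMap K (AlgebraicClosure K) x) = v x)
    (β : AlgebraicClosure K) (δβK : WithTop ℝ)
    (hδβK : IsLUB {γ : WithTop ℝ | ∃ x : K,
      γ = u (β - algebraMap K (AlgebraicClosure K) x)} δβK)
    {δ : WithTop ℝ} (hδ : δ ≤ δβK) {φ : RatFunc K} (hφ : φ ∈ SS v u β δ) :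
    ∃ (α : ℝ) (lam : WithTop ℝ), (α : WithTop ℝ) < δ ∧ δ ≤ lam ∧
      (lam = ⊤ ∨ ∃ r ∈ QGamma v, lam = (r : WithTop ℝ)) ∧
      ∀ δ' : WithTop ℝ, (α : WithTop ℝ) < δ' → δ' ≤ lam → φ ∈ SS v u β δ' := by
  rcases eq_or_ne φ 0 with rfl | h0
  · obtain ⟨c, hc⟩ := exists_real_lt δ
    exact ⟨c, ⊤, hc, le_top, Or.inl rfl, fun δ' _ _ => zero_mem_SS v u β δ'⟩
  obtain ⟨α, lam, a, k, h1, h2, h3, h4, h5⟩ := germ_rat v u hu β δ φ h0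
  have hE : Ev u β δ (fun y x => v (RatFunc.eval (RingHom.id K) y φ) 
      = ((a + k * x : ℝ) : WithTop ℝ)) := 
    ⟨α, h1, fun y x hx ha hd => (h5 y x hx ha (hd.trans_le h2)).2⟩
  obtain ⟨c, hc, hcx⟩ := SS_real v hnd u hu β δβK hδβK (a := a) (k := k) hδ
    ((Ev.and hE hφ).mono (fun y x h => by
      have := h.2; rw [h.1] at this; exact_mod_cast this))
  -- it suffices to extend positivity
  have main : ∀ lam' : WithTop ℝ, δ ≤ lam' → lam' ≤ lam → 
      (lam' = ⊤ ∨ ∃ r ∈ QGamma v, lam' = (r : WithTop ℝ)) →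
      (∀ x : ℝ, c < x → (x : WithTop ℝ) < lam' → 0 ≤ a + k * x) → 
      ∃ (α : ℝ) (lam : WithTop ℝ), (α : WithTop ℝ) < δ ∧ δ ≤ lam ∧
      (lam = ⊤ ∨ ∃ r ∈ QGamma v, lam = (r : WithTop ℝ)) ∧
      ∀ δ' : WithTop ℝ, (α : WithTop ℝ) < δ' → δ' ≤ lam → φ ∈ SS v u β δ' := by
    intro lam' g1 g2 g3 g4
    refine ⟨max α c, lam', ?_, g1, g3, ?_⟩
    · rcases max_choice α c with h | h <;> rw [h] <;> assumption
    · intro δ' q1 q2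
      refine ⟨max α c, q1, fun y x hx ha hd => ?_⟩
      have hd' := hd.trans_le q2
      show 0 ≤ v (RatFunc.eval (RingHom.id K) y φ)
      rw [(h5 y x hx ((le_max_left _ _).trans_lt ha) (hd'.trans_le g2)).2]
      exact_mod_cast g4 x ((le_max_right _ _).trans_lt ha) hd'
  by_cases hq : δ = ⊤ ∨ ∃ r ∈ QGamma v, δ = (r : WithTop ℝ)
  · exact main δ le_rfl h2 hq hcx
  push Not at hq
  obtain ⟨hq1, hq2⟩ := hq
  have hlt : δ < lam := by
    rcases h3 with h | ⟨r, hr, h⟩ | h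
    · exact absurd h hq1
    · exact absurd h (hq2 r hr)
    · exact h
  obtain ⟨d, rfl⟩ := WithTop.ne_top_iff_exists.1 hq1
  obtain ⟨e, he1, he2⟩ := exists_between hlt
  obtain ⟨e, rfl⟩ := WithTop.ne_top_iff_exists.1 he2.ne_top
  have he1 : d < e := WithTop.coe_lt_coe.1 he1
  have hc : c < d := WithTop.coe_lt_coe.1 hc
  have hcx : ∀ x, c < x → x < d → 0 ≤ a + k * x := fun x g1 g2 => hcx x g1 (WithTop.coe_lt_coe.2 g2)
  have ext : ∃ e' : ℝ, d < e' ∧ e' ≤ e ∧ ∀ x, c < x → x < e' → 0 ≤ a + k * x := by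
    rcases le_or_gt 0 k with hk | hk
    · refine ⟨e, he1, le_rfl, fun x g1 g2 => ?_⟩
      obtain ⟨x', g3, g4⟩ := exists_between (lt_min g1 hc)
      have := hcx x' g3 (g4.trans_le (min_le_right _ _))
      have g5 := g4.trans_le (min_le_left _ _)
      have hk' : (0:ℝ) ≤ k := by exact_mod_cast hk
      nlinarith
    · have hk' : (k:ℝ) < 0 := by exact_mod_cast hk
      have hne : d ≠ -a / k := by
        intro h
        refine hq2 d ?_ rfl
        have := qg_mul h4 (-1 / (k : ℚ))
        rw [h]
        convert this using 1
        push_cast; ring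
      have hle : d ≤ -a / k := by
        by_contra! hlt
        obtain ⟨x', g3, g4⟩ := exists_between (max_lt hc hlt)
        have := hcx x' ((le_max_left _ _).trans_lt g3) g4
        have g5 := (le_max_right _ _).trans_lt g3
        rw [div_lt_iff_of_neg hk'] at g5
        linarith
      refine ⟨min e (-a / k), lt_min he1 (lt_of_le_of_ne hle hne), min_le_left _ _, ?_⟩
      intro x _ g2
      have g5 := g2.trans_le (min_le_right _ _)
      rw [lt_div_iff_of_neg hk'] at g5
      linarith
  obtain ⟨e', g1, g2, g3⟩ := ext
  obtain ⟨r, hr, g4, g5⟩ := hnd.exists_between g1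
  refine main r (WithTop.coe_le_coe.2 g4.le) ?_ (Or.inr ⟨r, qg_vg hr, rfl⟩) ?_
  · exact (WithTop.coe_le_coe.2 (g5.le.trans g2)).trans he2.le
  · intro x q1 q2
    exact g3 x q1 ((WithTop.coe_lt_coe.1 q2).trans g5)

theorem val_diff (v : AddValuation K (WithTop ℝ))
    (u : AddValuation (AlgebraicClosure K) (WithTop ℝ))
    (hu : ∀ x : K, u (algebraMap K (AlgebraicClosure K) x) = v x)
    (β : AlgebraicClosure K) (z y : K) :
    v (z - y) = u ((β - algebraMap K _ y) - (β - algebraMap K _ z)) := by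
  rw [← hu, _root_.map_sub]; congr 1; ring

theorem sep_lower (v : AddValuation K (WithTop ℝ))
    (hnd : Dense (valueGroup v))
    (u : AddValuation (AlgebraicClosure K) (WithTop ℝ))
    (hu : ∀ x : K, u (algebraMap K (AlgebraicClosure K) x) = v x)
    (β : AlgebraicClosure K) (δβK : WithTop ℝ)
    (hδβK : IsLUB {γ : WithTop ℝ | ∃ x : K,
      γ = u (β - algebraMap K (AlgebraicClosure K) x)} δβK)
    {y : K} {g : ℝ} (hg : g ∈ valueGroup v) (hy : u (β - algebraMap K _ y) = (g : WithTop ℝ)) :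
    ∃ φ : RatFunc K, ∀ δ ≤ δβK, (φ ∈ SS v u β δ ↔ (g : WithTop ℝ) < δ) := by
  obtain ⟨t, ht⟩ := hg
  refine ⟨algebraMap K[X] _ (C t⁻¹ * (X - C y)), fun δ hδ => ?_⟩
  have hev : ∀ z : K, RatFunc.eval (RingHom.id K) z 
      (algebraMap K[X] (RatFunc K) (C t⁻¹ * (X - C y))) = (z - y) / t := by
    intro z
    rw [RatFunc.eval_algebraMap]; simp; field_simp
  constructor
  · rintro ⟨α, h1, h2⟩
    by_contra! hlt
    obtain ⟨z, x, _, h3, h4, h5⟩ := dens v hnd u hu β δβK hδβK h1 hδ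
    have h6 := h2 z x h3 h4 h5
    have hxg := h5.trans_le hlt
    have h7 : v (z - y) = (x : WithTop ℝ) := by
      rw [val_diff v u hu β, AddValuation.map_sub_eq_of_lt_right, h3]
      rwa [hy, h3]
    simp only [hev] at h6
    rw [aval_div v h7 ht] at h6
    have h8 : 0 ≤ x - g := by exact_mod_cast h6
    have h9 : x < g := WithTop.coe_lt_coe.1 hxg
    linarith
  · intro hlt
    refine ⟨g, hlt, fun z x h3 h4 h5 => ?_⟩
    have h7 : v (z - y) = (g : WithTop ℝ) := by
      rw [val_diff v u hu β, AddValuation.map_sub_eq_of_lt_left, hy]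
      rw [hy, h3]; exact_mod_cast h4
    simp only [hev]
    rw [aval_div v h7 ht]
    simp

theorem sep_upper (v : AddValuation K (WithTop ℝ))
    (hnd : Dense (valueGroup v))
    (u : AddValuation (AlgebraicClosure K) (WithTop ℝ))
    (hu : ∀ x : K, u (algebraMap K (AlgebraicClosure K) x) = v x)
    (β : AlgebraicClosure K) (δβK : WithTop ℝ)
    (hδβK : IsLUB {γ : WithTop ℝ | ∃ x : K,
      γ = u (β - algebraMap K (AlgebraicClosure K) x)} δβK)
    {r : ℝ} (hr : r ∈ QGamma v) (hlt : (r : WithTop ℝ) < δβK) :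
    ∃ φ : RatFunc K, ∀ δ ≤ δβK, (φ ∈ SS v u β δ ↔ δ ≤ (r : WithTop ℝ)) := by
  obtain ⟨m, hm, t, ht⟩ := qg_iff.1 hr
  obtain ⟨_, ⟨y, rfl⟩, hy⟩ := (lt_isLUB_iff hδβK).1 hlt
  have ht0 := aval_ne v ht
  have hm' : (0 : ℝ) < m := by exact_mod_cast hm
  set ψ : RatFunc K := algebraMap K[X] _ (C t⁻¹ * (X - C y) ^ m) with hψ
  have hψ0 : ψ ≠ 0 := by
    rw [hψ, Ne, FaithfulSMul.algebraMap_eq_zero_iff]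
    exact mul_ne_zero (by simpa using ht0) (pow_ne_zero _ (X_sub_C_ne_zero y))
  have hev : ∀ z : K, RatFunc.eval (RingHom.id K) z ψ = (z - y) ^ m / t := by
    intro z
    rw [hψ, RatFunc.eval_algebraMap]; simp; field_simp
  refine ⟨ψ⁻¹, fun δ hδ => ?_⟩
  have hinv := ev_inv v u hu β δ ψ hψ0
  constructor
  · intro h
    obtain ⟨α, h1, h2⟩ := Ev.and hinv h
    by_contra! hlt
    have h1' : ((max α r : ℝ) : WithTop ℝ) < δ := by
      rcases max_choice α r with h | h <;> rw [h] <;> assumption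
    obtain ⟨z, x, _, h3, h4, h5⟩ := dens v hnd u hu β δβK hδβK h1' hδ
    obtain ⟨⟨h6, h7⟩, h8⟩ := h2 z x h3 ((le_max_left _ _).trans_lt h4) h5
    simp only [h7, hev] at h8
    rw [hev] at h6
    have hne : z - y ≠ 0 := by
      intro h; rw [h, zero_pow hm.ne', zero_div] at h6; exact h6 rfl
    obtain ⟨w, hw⟩ := aval_real v hne
    rw [inv_div, aval_div v ht (aval_pow v hw m)] at h8
    have h9 : (0 : ℝ) ≤ m * r - m * w := by exact_mod_cast h8
    have h10 : (r : WithTop ℝ) < w := by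
      rw [← hw, val_diff v u hu β]
      refine lt_of_lt_of_le (lt_min hy ?_) (AddValuation.map_sub u _ _)
      rw [h3]; exact_mod_cast (le_max_right _ _).trans_lt h4
    have h11 : r < w := WithTop.coe_lt_coe.1 h10
    nlinarith
  · intro hle
    obtain ⟨α, h1, h2⟩ := hinv
    refine ⟨α, h1, fun z x h3 h4 h5 => ?_⟩
    have h6 := (h2 z x h3 h4 h5).2
    have hxr := h5.trans_le hle
    have h7 : v (z - y) = (x : WithTop ℝ) := by
      rw [val_diff v u hu β, AddValuation.map_sub_eq_of_lt_right, h3]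
      rw [h3]; exact hxr.trans hy
    simp only [h6, hev]
    rw [inv_div, aval_div v ht (aval_pow v h7 m)]
    have h9 : x < r := WithTop.coe_lt_coe.1 hxr
    have : (0 : ℝ) ≤ m * r - m * x := by nlinarith
    exact_mod_cast this

theorem SS_inj (v : AddValuation K (WithTop ℝ))
    (hnd : Dense (valueGroup v))
    (u : AddValuation (AlgebraicClosure K) (WithTop ℝ))
    (hu : ∀ x : K, u (algebraMap K (AlgebraicClosure K) x) = v x)
    (β : AlgebraicClosure K) (δβK : WithTop ℝ)
    (hδβK : IsLUB {γ : WithTop ℝ | ∃ x : K,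
      γ = u (β - algebraMap K (AlgebraicClosure K) x)} δβK)
    {δ δ' : WithTop ℝ} (hδ : δ ≤ δβK) (hδ' : δ' ≤ δβK) 
    (h : SS v u β δ = SS v u β δ') : δ = δ' := by
  have key : ∀ δ δ' : WithTop ℝ, δ ≤ δβK → δ' ≤ δβK → SS v u β δ = SS v u β δ' → ¬ δ < δ' := by
    intro δ δ' hδ hδ' h hlt
    obtain ⟨d, rfl⟩ := WithTop.ne_top_iff_exists.1 hlt.ne_top
    obtain ⟨y, g, hg, h1, h2, h3⟩ := dens v hnd u hu β δβK hδβK hlt hδ'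
    obtain ⟨φ, hφ⟩ := sep_lower v hnd u hu β δβK hδβK hg h1
    have := (hφ _ hδ').2 h3
    rw [← h, hφ _ hδ] at this
    exact lt_asymm h2 (WithTop.coe_lt_coe.1 this)
  exact le_antisymm (not_lt.1 (key _ _ hδ' hδ h.symm)) (not_lt.1 (key _ _ hδ hδ' h))

theorem ves_eq (v : AddValuation K (WithTop ℝ))
    (u : AddValuation (AlgebraicClosure K) (WithTop ℝ))
    (hu : ∀ x : K, u (algebraMap K (AlgebraicClosure K) x) = v x)
    (β : AlgebraicClosure K) {s : ℕ → K} {xs : ℕ → ℝ} {δ : WithTop ℝ}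
    (hs : ∀ n, u (β - algebraMap K _ (s n)) = (xs n : WithTop ℝ)) (hm : StrictMono xs)
    (hlt : ∀ n, (xs n : WithTop ℝ) < δ) 
    (hcof : ∀ c : ℝ, (c : WithTop ℝ) < δ → ∃ n, c < xs n) : VESet v s = SS v u β δ := by
  ext φ
  constructor
  · intro h
    rcases eq_or_ne φ 0 with rfl | h0
    · exact zero_mem_SS v u β δ
    obtain ⟨N, hN⟩ := eventually_atTop.1 h
    obtain ⟨a, k, α, h1, h2⟩ := (germ_rat v u hu β δ φ h0).ev
    obtain ⟨N', hN'⟩ := hcof α h1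
    set M := max N N'
    have hM : ∀ n ≥ M, 0 ≤ a + k * xs n := by
      intro n hn
      have h3 := hN n ((le_max_left _ _).trans hn)
      rw [(h2 (s n) (xs n) (hs n) (hN'.trans_le (hm.monotone ((le_max_right _ _).trans hn))) 
        (hlt n)).2] at h3
      exact_mod_cast h3
    refine ⟨xs M, hlt M, fun y x hx g1 g2 => ?_⟩
    show 0 ≤ v (RatFunc.eval (RingHom.id K) y φ)
    rw [(h2 y x hx ((hN'.trans_le (hm.monotone (le_max_right _ _))).trans g1) g2).2]
    obtain ⟨n, hn⟩ := hcof x g2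
    have q1 := hM M le_rfl
    have q2 := hM n (hm.le_iff_le.1 (g1.trans hn).le)
    have : 0 ≤ a + k * x := by
      rcases le_total 0 (k : ℝ) with hk | hk <;> nlinarith
    exact_mod_cast this
  · rintro ⟨α, h1, h2⟩
    obtain ⟨N, hN⟩ := hcof α h1
    refine eventually_atTop.2 ⟨N, fun n hn => ?_⟩
    exact h2 (s n) (xs n) (hs n) (hN.trans_le (hm.monotone hn)) (hlt n)

theorem exists_sup (xs : ℕ → ℝ) (hm : StrictMono xs) : ∃ δ : WithTop ℝ, 
    (∀ n, (xs n : WithTop ℝ) < δ) ∧ ∀ c : ℝ, (c : WithTop ℝ) < δ → ∃ n, c < xs n := by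
  by_cases hb : BddAbove (Set.range xs)
  · refine ⟨((⨆ n, xs n : ℝ) : WithTop ℝ), fun n => ?_, fun c hc => ?_⟩
    · exact WithTop.coe_lt_coe.2 ((hm n.lt_succ_self).trans_le (le_ciSup hb _))
    · exact exists_lt_of_lt_ciSup (WithTop.coe_lt_coe.1 hc)
  · refine ⟨⊤, fun n => WithTop.coe_lt_top _, fun c _ => ?_⟩
    rw [not_bddAbove_iff] at hb
    obtain ⟨_, ⟨n, rfl⟩, h⟩ := hb c
    exact ⟨n, h⟩

theorem exists_approx (δ : WithTop ℝ) : ∃ xs : ℕ → ℝ, StrictMono xs ∧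
    (∀ n, (xs n : WithTop ℝ) < δ) ∧ ∀ c : ℝ, (c : WithTop ℝ) < δ → ∃ n, c < xs n := by
  induction δ with
  | top => exact ⟨fun n => n, Nat.strictMono_cast, fun n => WithTop.coe_lt_top _, 
      fun c _ => exists_nat_gt c⟩
  | coe d =>
    obtain ⟨xs, h1, h2, h3⟩ := exists_seq_strictMono_tendsto d
    refine ⟨xs, h1, fun n => WithTop.coe_lt_coe.2 (h2 n), fun c hc => ?_⟩
    exact (h3.eventually (lt_mem_nhds (WithTop.coe_lt_coe.1 hc))).exists

theorem diff_seq (v : AddValuation K (WithTop ℝ))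
    (u : AddValuation (AlgebraicClosure K) (WithTop ℝ))
    (hu : ∀ x : K, u (algebraMap K (AlgebraicClosure K) x) = v x)
    (β : AlgebraicClosure K) {s : ℕ → K} (h : IsPCLimitAC u s β) (n : ℕ) :
    v (s (n + 1) - s n) = u (β - algebraMap K _ (s n)) := by
  rw [val_diff v u hu β, AddValuation.map_sub_eq_of_lt_left _ (h n)]

theorem seq_main (v : AddValuation K (WithTop ℝ))
    (u : AddValuation (AlgebraicClosure K) (WithTop ℝ))
    (hu : ∀ x : K, u (algebraMap K (AlgebraicClosure K) x) = v x)
    (β : AlgebraicClosure K) (δβK : WithTop ℝ)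
    (hδβK : IsLUB {γ : WithTop ℝ | ∃ x : K,
      γ = u (β - algebraMap K (AlgebraicClosure K) x)} δβK) 
    {s : ℕ → K} (h : IsPCLimitAC u s β) :
    ∃ δ ≤ δβK, IsBreadth v s δ ∧ VESet v s = SS v u β δ := by
  have hx : ∀ n, ∃ x : ℝ, u (β - algebraMap K _ (s n)) = (x : WithTop ℝ) := fun n => by
    obtain ⟨x, hx⟩ := WithTop.ne_top_iff_exists.1 (h n).ne_top
    exact ⟨x, hx.symm⟩
  choose xs hxs using hx
  have hm : StrictMono xs := strictMono_nat_of_lt_succ (fun n => by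
    have := h n
    rw [hxs, hxs] at this
    exact WithTop.coe_lt_coe.1 this)
  obtain ⟨δ, h1, h2⟩ := exists_sup xs hm
  refine ⟨δ, ?_, ⟨?_, ?_⟩, ves_eq v u hu β hxs hm h1 h2⟩
  · by_contra! hlt
    obtain ⟨d, hd⟩ := WithTop.ne_top_iff_exists.1 hlt.ne_top
    rw [← hd] at hlt
    obtain ⟨n, hn⟩ := h2 d hlt
    have := hδβK.1 ⟨s n, rfl⟩
    rw [hxs, ← hd] at this
    exact not_le.2 hn (WithTop.coe_le_coe.1 this)
  · intro a ha
    obtain ⟨a, rfl⟩ := WithTop.ne_top_iff_exists.1 ha.ne_top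
    obtain ⟨N, hN⟩ := h2 a ha
    refine eventually_atTop.2 ⟨N, fun n hn => ?_⟩
    beta_reduce
    rw [diff_seq v u hu β h, hxs]
    exact WithTop.coe_lt_coe.2 (hN.trans_le (hm.monotone hn))
  · intro b hb
    refine Eventually.of_forall (fun n => ?_)
    beta_reduce
    rw [diff_seq v u hu β h, hxs]
    exact (h1 n).trans hb

theorem seq_exists (v : AddValuation K (WithTop ℝ))
    (hnd : Dense (valueGroup v))
    (u : AddValuation (AlgebraicClosure K) (WithTop ℝ))
    (hu : ∀ x : K, u (algebraMap K (AlgebraicClosure K) x) = v x)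
    (β : AlgebraicClosure K) (δβK : WithTop ℝ)
    (hδβK : IsLUB {γ : WithTop ℝ | ∃ x : K,
      γ = u (β - algebraMap K (AlgebraicClosure K) x)} δβK) 
    {δ : WithTop ℝ} (hδ : δ ≤ δβK) :
    ∃ s : ℕ → K, IsPC v s ∧ IsPCLimitAC u s β ∧ VESet v s = SS v u β δ := by
  obtain ⟨as, ha, h1, h2⟩ := exists_approx δ
  have : ∀ n, ∃ (y : K) (x : ℝ), x ∈ valueGroup v ∧ u (β - algebraMap K _ y) = (x : WithTop ℝ) ∧
      as n < x ∧ (x : WithTop ℝ) < (as (n + 1) : WithTop ℝ) := fun n =>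
    dens v hnd u hu β δβK hδβK (WithTop.coe_lt_coe.2 (ha n.lt_succ_self)) ((h1 _).le.trans hδ)
  choose s xs _ hs h3 h4 using this
  have h4' : ∀ n, xs n < as (n + 1) := fun n => WithTop.coe_lt_coe.1 (h4 n)
  have hm : StrictMono xs := strictMono_nat_of_lt_succ (fun n => (h4' n).trans (h3 _))
  have hl : IsPCLimitAC u s β := by
    intro n
    rw [hs, hs]; exact WithTop.coe_lt_coe.2 (hm n.lt_succ_self)
  refine ⟨s, ?_, hl, ves_eq v u hu β hs hm (fun n => (h4 n).trans (h1 _)) ?_⟩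
  · intro n
    rw [diff_seq v u hu β hl, diff_seq v u hu β hl]; exact hl n
  · intro c hc
    obtain ⟨n, hn⟩ := h2 c hc
    exact ⟨n, hn.trans (h3 n)⟩

end helpers

/-- If `V` is not discrete, the map `Σ_β : 𝒱(β,•) → (-∞, δ(β,K)]`,
`V_E ↦ δ_E`, is a homeomorphism onto the interval `(-∞, δ(β,K)]` endowed with the
`ℚΓ_v`-upper limit topology. -/
theorem statement9 (v : AddValuation K (WithTop ℝ)) (hv : IsRankOne v)
    (hnd : Dense (valueGroup v))
    (u : AddValuation (AlgebraicClosure K) (WithTop ℝ))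
    (hu : ∀ x : K, u (algebraMap K (AlgebraicClosure K) x) = v x)
    (β : AlgebraicClosure K) (δβK : WithTop ℝ)
    (hδβK : IsLUB {γ : WithTop ℝ | ∃ x : K,
      γ = u (β - algebraMap K (AlgebraicClosure K) x)} δβK) :
    ∃ Sb : ↥(VVβ v u β) → {γ : WithTop ℝ // γ ≤ δβK},
      (∀ (W : ↥(VVβ v u β)) (s : ℕ → K), IsPC v s → IsPCLimitAC u s β →
        ((W : ValuationSubring (RatFunc K)) : Set (RatFunc K)) = VESet v s →
        IsBreadth v s (Sb W : WithTop ℝ)) ∧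
      @IsHomeomorph _ _ (zarSub (VVβ v u β)) (upperTopWT δβK (QGamma v)) Sb := by
  classical
  have hex : ∀ W : ↥(VVβ v u β), ∃ δ : {γ : WithTop ℝ // γ ≤ δβK},
      ((W : ValuationSubring (RatFunc K)) : Set (RatFunc K)) = SS v u β δ := by
    rintro ⟨W, s, h1, h2, h3⟩
    obtain ⟨δ, hδ, _, h5⟩ := seq_main v u hu β δβK hδβK h2
    exact ⟨⟨δ, hδ⟩, h3.trans h5⟩
  choose Sb hSb using hex
  have hmem : ∀ (W : ↥(VVβ v u β)) (φ : RatFunc K),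
      φ ∈ (W : ValuationSubring (RatFunc K)) ↔ φ ∈ SS v u β (Sb W) := by
    intro W φ
    rw [← hSb W]; rfl
  refine ⟨Sb, ?_, ?_⟩
  · intro W s _ h2 h3
    obtain ⟨δ, hδ, h4, h5⟩ := seq_main v u hu β δβK hδβK h2
    have : (Sb W : WithTop ℝ) = δ := SS_inj v hnd u hu β δβK hδβK (Sb W).2 hδ
      ((hSb W).symm.trans (h3.trans h5))
    rw [this]; exact h4
  · letI : TopologicalSpace ↥(VVβ v u β) := zarSub (VVβ v u β)
    letI : TopologicalSpace {γ : WithTop ℝ // γ ≤ δβK} := upperTopWT δβK (QGamma v)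
    let g : {γ : WithTop ℝ // γ ≤ δβK} → ↥(VVβ v u β) := fun γ =>
      ⟨RR v u hu β γ, by
        obtain ⟨s, h1, h2, h3⟩ := seq_exists v hnd u hu β δβK hδβK γ.2
        exact ⟨s, h1, h2, h3.symm⟩⟩
    have hg : ∀ γ, Sb (g γ) = γ := fun γ => by
      refine Subtype.ext (SS_inj v hnd u hu β δβK hδβK (Sb (g γ)).2 γ.2 ?_)
      exact (hSb (g γ)).symm
    have hinj : Function.Injective Sb := by
      intro W W' h
      refine Subtype.ext (SetLike.coe_injective ?_)
      rw [hSb W, hSb W', h]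
    have hB : ∀ φ : RatFunc K, 
        IsOpen {W : ↥(VVβ v u β) | φ ∈ (W : ValuationSubring (RatFunc K))} := by
      intro φ
      refine (@isOpen_induced_iff _ _ (zarTop (RatFunc K)) _ _).2 ⟨{W | φ ∈ W}, ?_, rfl⟩
      exact isOpen_generateFrom_of_mem ⟨φ, rfl⟩
    refine isHomeomorph_iff_exists_inverse.2 ⟨?_, g, fun W => hinj (hg _), hg, ?_⟩
    · refine continuous_generateFrom_iff.2 ?_
      rintro U ⟨α, lam, _, hlam, rfl⟩
      refine isOpen_iff_forall_mem_open.2 ?_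
      rintro W ⟨hW1, hW2⟩
      obtain ⟨a, rfl⟩ := WithTop.ne_top_iff_exists.1 hW1.ne_top
      obtain ⟨y, c, hc, h1, h2, h3⟩ := dens v hnd u hu β δβK hδβK hW1 (Sb W).2
      obtain ⟨φ, hφ⟩ := sep_lower v hnd u hu β δβK hδβK hc h1
      have hφ' : ∀ W' : ↥(VVβ v u β), φ ∈ (W' : ValuationSubring (RatFunc K)) → 
          (a : WithTop ℝ) < (Sb W' : WithTop ℝ) := by
        intro W' h
        exact (WithTop.coe_lt_coe.2 h2).trans ((hφ _ (Sb W').2).1 ((hmem W' φ).1 h))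
      have hφW := (hmem W φ).2 ((hφ _ (Sb W).2).2 h3)
      by_cases hle : δβK ≤ lam
      · exact ⟨_, fun W' h => ⟨hφ' W' h, (Sb W').2.trans hle⟩, hB φ, hφW⟩
      · push Not at hle
        obtain ⟨r, hr, rfl⟩ : ∃ r ∈ QGamma v, lam = (r : WithTop ℝ) := by
          rcases hlam with h | h
          · exact absurd h hle.ne_top
          · exact h
        obtain ⟨ψ, hψ⟩ := sep_upper v hnd u hu β δβK hδβK hr hle
        refine ⟨_, ?_, (hB φ).inter (hB ψ), hφW, ?_⟩
        · rintro W' ⟨q1, q2⟩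
          exact ⟨hφ' W' q1, (hψ _ (Sb W').2).1 ((hmem W' ψ).1 q2)⟩
        · exact (hmem W ψ).2 ((hψ _ (Sb W).2).2 hW2)
    · refine continuous_induced_rng.2 (continuous_generateFrom_iff.2 ?_)
      rintro U ⟨φ, rfl⟩
      refine isOpen_iff_forall_mem_open.2 ?_
      intro γ hγ
      obtain ⟨α, lam, h1, h2, h3, h4⟩ := SS_open v hnd u hu β δβK hδβK γ.2 (φ := φ) hγ
      refine ⟨{γ' : {γ : WithTop ℝ // γ ≤ δβK} | (α : WithTop ℝ) < (γ' : WithTop ℝ) ∧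
        (γ' : WithTop ℝ) ≤ lam}, ?_, ?_, h1, h2⟩
      · rintro γ' ⟨q1, q2⟩
        exact h4 _ q1 q2
      · exact isOpen_generateFrom_of_mem ⟨α, lam, h1.le.trans γ.2, h3, rfl⟩

end PaperPCZar
end
end

section
/- Let β ∈ K̄ and let u be an extension of v to K̄. Then the Zariski topology and the constructible topology induce the same subspace topology on 𝒱(β,•). -/
open Filter Topology TopologicalSpace Set Polynomial

noncomputable section

namespace PaperPCZar

variable {K : Type*} [Field K]

theorem usub_eq {F : Type*} [Field F] (u : AddValuation F (WithTop ℝ)) {a b c : F}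
    (h : u (a - b) < u (b - c)) : u (a - c) = u (a - b) := by
  have := AddValuation.map_add_eq_of_lt_left u h
  simpa using this

theorem usub_le {F : Type*} [Field F] (u : AddValuation F (WithTop ℝ)) {a b c : F} {g : WithTop ℝ}
    (h1 : g ≤ u (a - b)) (h2 : g ≤ u (b - c)) : g ≤ u (a - c) := by
  have := AddValuation.map_le_add u h1 h2
  simpa using this

theorem usub_lt {F : Type*} [Field F] (u : AddValuation F (WithTop ℝ)) {a b c : F} {g : WithTop ℝ}
    (h1 : g < u (a - b)) (h2 : g < u (b - c)) : g < u (a - c) := by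
  have := AddValuation.map_lt_add u h1 h2
  simpa using this

theorem exists_real_s11 {F : Type*} [Field F] (u : AddValuation F (WithTop ℝ)) {a : F} (h : a ≠ 0) :
    ∃ r : ℝ, u a = (r : WithTop ℝ) := by
  have := (AddValuation.ne_top_iff u).2 h
  obtain ⟨r, hr⟩ := WithTop.ne_top_iff_exists.1 this
  exact ⟨r, hr.symm⟩

theorem nz_of_real {F : Type*} [Field F] (u : AddValuation F (WithTop ℝ)) {a : F} {r : ℝ}
    (h : u a = (r : WithTop ℝ)) : a ≠ 0 := by
  rw [← AddValuation.ne_top_iff u, h]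
  exact WithTop.coe_ne_top

theorem val_mul {F : Type*} [Field F] (u : AddValuation F (WithTop ℝ)) {a b : F} {r t : ℝ}
    (h : u a = (r : WithTop ℝ)) (h' : u b = (t : WithTop ℝ)) :
    u (a * b) = ((r + t : ℝ) : WithTop ℝ) := by
  rw [AddValuation.map_mul, h, h']; rfl

theorem val_pow {F : Type*} [Field F] (u : AddValuation F (WithTop ℝ)) {a : F} {r : ℝ}
    (h : u a = (r : WithTop ℝ)) (n : ℕ) :
    u (a ^ n) = ((n * r : ℝ) : WithTop ℝ) := by
  induction n with
  | zero => simp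
  | succ n ih => rw [pow_succ, val_mul u ih h]; congr 1; push_cast; ring

theorem val_inv {F : Type*} [Field F] (u : AddValuation F (WithTop ℝ)) {a : F} {r : ℝ}
    (h : u a = (r : WithTop ℝ)) :
    u a⁻¹ = ((-r : ℝ) : WithTop ℝ) := by
  have ha := nz_of_real u h
  obtain ⟨t, ht⟩ := exists_real_s11 u (inv_ne_zero ha)
  have := val_mul u h ht
  rw [mul_inv_cancel₀ ha, AddValuation.map_one] at this
  have h2 : (0 : ℝ) = r + t := by exact_mod_cast this
  rw [ht]; congr 1; linarith

theorem alg_val (v : AddValuation K (WithTop ℝ))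
    (u : AddValuation (AlgebraicClosure K) (WithTop ℝ))
    (hu : ∀ x : K, u (algebraMap K (AlgebraicClosure K) x) = v x)
    {y : AlgebraicClosure K} (hy : y ≠ 0) :
    ∃ c : ℝ, u y = (c : WithTop ℝ) ∧ ∃ m : ℕ, 0 < m ∧ ∃ d : K, v d = ((m * c : ℝ) : WithTop ℝ) := by
  obtain ⟨c, hc⟩ := exists_real_s11 u hy
  refine ⟨c, hc, ?_⟩
  have hint : IsIntegral K y := Algebra.IsIntegral.isIntegral y
  set p := minpoly K y with hp
  have hp0 : p ≠ 0 := minpoly.ne_zero hint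
  set T : ℕ → AlgebraicClosure K := fun i => algebraMap K _ (p.coeff i) * y ^ i with hT
  have hsum : ∑ i ∈ p.support, T i = 0 := by
    have := minpoly.aeval K y
    rw [aeval_def, eval₂_eq_sum, sum_def] at this
    exact this
  obtain ⟨i, hi, hmin⟩ := Finset.exists_min_image p.support (fun i => u (T i))
    (support_nonempty.2 hp0)
  have key : ∀ j ∈ p.support, ∃ a : ℝ, v (p.coeff j) = (a : WithTop ℝ) ∧
      u (T j) = ((a + j * c : ℝ) : WithTop ℝ) := by
    intro j hj
    obtain ⟨a, ha⟩ := exists_real_s11 v (mem_support_iff.1 hj)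
    exact ⟨a, ha, val_mul u ((hu _).trans ha) (val_pow u hc j)⟩
  obtain ⟨a, ha, hTi⟩ := key i hi
  have : ∃ j ∈ p.support, j ≠ i ∧ u (T j) ≤ u (T i) := by
    by_contra! hcon
    have h1 : u (T i) < u (∑ j ∈ p.support.erase i, T j) := by
      apply AddValuation.map_lt_sum
      · rw [hTi]; exact WithTop.coe_ne_top
      · intro j hj
        exact hcon j (Finset.mem_of_mem_erase hj) (Finset.ne_of_mem_erase hj)
    have h2 := AddValuation.map_add_eq_of_lt_left u h1
    rw [Finset.add_sum_erase _ _ hi, hsum, AddValuation.map_zero, hTi] at h2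
    exact WithTop.top_ne_coe h2
  obtain ⟨j, hj, hji, hle⟩ := this
  obtain ⟨b, hb, hTj⟩ := key j hj
  have heq := le_antisymm hle (hmin j hj)
  rw [hTj, hTi] at heq
  have heq' : b + j * c = a + i * c := by exact_mod_cast heq
  rcases lt_or_gt_of_ne hji with h | h
  · refine ⟨i - j, by omega, p.coeff j * (p.coeff i)⁻¹, ?_⟩
    rw [val_mul v hb (val_inv v ha), Nat.cast_sub h.le]
    congr 1; linarith
  · refine ⟨j - i, by omega, p.coeff i * (p.coeff j)⁻¹, ?_⟩
    rw [val_mul v ha (val_inv v hb), Nat.cast_sub h.le]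
    congr 1; linarith

/-- Eventual linearity of the value of `f` near the breadth of the sequence. -/
def Lin (v : AddValuation K (WithTop ℝ)) (u : AddValuation (AlgebraicClosure K) (WithTop ℝ))
    (β : AlgebraicClosure K) (g : ℕ → ℝ) (f : Polynomial (AlgebraicClosure K)) : Prop :=
  ∃ (k : ℕ) (c : ℝ) (m : ℕ) (d : K) (N : ℕ), 0 < m ∧ v d = ((m * c : ℝ) : WithTop ℝ) ∧
    ∀ (x : AlgebraicClosure K) (r : ℝ), u (x - β) = (r : WithTop ℝ) → g N < r → (∃ M, r < g M) →
      u (f.eval x) = ((c + k * r : ℝ) : WithTop ℝ)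

theorem Lin.mul {v : AddValuation K (WithTop ℝ)}
    {u : AddValuation (AlgebraicClosure K) (WithTop ℝ)}
    {β : AlgebraicClosure K} {g : ℕ → ℝ} (hg : StrictMono g)
    {f f' : Polynomial (AlgebraicClosure K)}
    (h : Lin v u β g f) (h' : Lin v u β g f') : Lin v u β g (f * f') := by
  obtain ⟨k, c, m, d, N, hm, hd, H⟩ := h
  obtain ⟨k', c', m', d', N', hm', hd', H'⟩ := h'
  refine ⟨k + k', c + c', m * m', d ^ m' * d' ^ m, max N N', Nat.mul_pos hm hm', ?_, ?_⟩
  · rw [val_mul v (val_pow v hd _) (val_pow v hd' _)]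
    congr 1; push_cast; ring
  · intro x r hx hr hM
    have h1 := H x r hx ((hg.monotone (le_max_left N N')).trans_lt hr) hM
    have h2 := H' x r hx ((hg.monotone (le_max_right N N')).trans_lt hr) hM
    rw [eval_mul, val_mul u h1 h2]
    congr 1; push_cast; ring

theorem Lin.const {v : AddValuation K (WithTop ℝ)}
    {u : AddValuation (AlgebraicClosure K) (WithTop ℝ)}
    (hu : ∀ x : K, u (algebraMap K (AlgebraicClosure K) x) = v x)
    {β : AlgebraicClosure K} {g : ℕ → ℝ}
    {a : AlgebraicClosure K} (ha : a ≠ 0) : Lin v u β g (C a) := by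
  obtain ⟨c, hc, m, hm, d, hd⟩ := alg_val v u hu ha
  refine ⟨0, c, m, d, 0, hm, hd, ?_⟩
  intro x r _ _ _
  simp [hc]

theorem Lin.lin {v : AddValuation K (WithTop ℝ)}
    {u : AddValuation (AlgebraicClosure K) (WithTop ℝ)}
    (hu : ∀ x : K, u (algebraMap K (AlgebraicClosure K) x) = v x)
    {β : AlgebraicClosure K} {g : ℕ → ℝ}
    (a : AlgebraicClosure K) : Lin v u β g (X - C a) := by
  by_cases h : ∀ n, (g n : WithTop ℝ) ≤ u (β - a)
  · refine ⟨1, 0, 1, 1, 0, one_pos, by simp, ?_⟩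
    rintro x r hx hr ⟨M, hM⟩
    have : u (x - β) < u (β - a) := by
      rw [hx]
      exact lt_of_lt_of_le (by exact_mod_cast hM) (h M)
    simp [usub_eq u this, hx]
  · push Not at h
    obtain ⟨N, hN⟩ := h
    have hne : β - a ≠ 0 := by
      intro h0
      rw [h0, AddValuation.map_zero] at hN
      exact not_top_lt hN
    obtain ⟨c, hc, m, hm, d, hd⟩ := alg_val v u hu hne
    refine ⟨0, c, m, d, N, hm, hd, ?_⟩
    rintro x r hx hr -
    have h1 : u (a - β) < u (β - x) := by
      rw [AddValuation.map_sub_swap u a, AddValuation.map_sub_swap u β x, hx]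
      exact hN.trans (by exact_mod_cast hr)
    have h2 := usub_eq u h1
    rw [AddValuation.map_sub_swap u a x, AddValuation.map_sub_swap u a β, hc] at h2
    simp [h2]

theorem Lin.all {v : AddValuation K (WithTop ℝ)}
    {u : AddValuation (AlgebraicClosure K) (WithTop ℝ)}
    (hu : ∀ x : K, u (algebraMap K (AlgebraicClosure K) x) = v x)
    {β : AlgebraicClosure K} {g : ℕ → ℝ} (hg : StrictMono g)
    {f : Polynomial (AlgebraicClosure K)} (hf : f ≠ 0) : Lin v u β g f := by
  rw [(IsAlgClosed.splits f).eq_prod_roots]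
  refine Lin.mul hg (Lin.const hu (leadingCoeff_ne_zero.2 hf)) ?_
  induction f.roots using Multiset.induction_on with
  | empty => simpa using Lin.const (a := 1) hu one_ne_zero
  | cons a s ih =>
    rw [Multiset.map_cons, Multiset.prod_cons]
    exact Lin.mul hg (Lin.lin hu a) ih

/-- Eventual linearity for rational functions over `K`. -/
theorem ratLin {v : AddValuation K (WithTop ℝ)}
    {u : AddValuation (AlgebraicClosure K) (WithTop ℝ)}
    (hu : ∀ x : K, u (algebraMap K (AlgebraicClosure K) x) = v x)
    {β : AlgebraicClosure K} {g : ℕ → ℝ} (hg : StrictMono g)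
    {φ : RatFunc K} (hφ : φ ≠ 0) :
    ∃ (k : ℤ) (c : ℝ) (m : ℕ) (d : K) (N : ℕ), 0 < m ∧ v d = ((m * c : ℝ) : WithTop ℝ) ∧
      ∀ (x : K) (r : ℝ), u (β - algebraMap K _ x) = (r : WithTop ℝ) → g N < r → (∃ M, r < g M) →
        v (RatFunc.eval (RingHom.id K) x φ) = ((c + k * r : ℝ) : WithTop ℝ) := by
  have h1 : φ.num.map (algebraMap K (AlgebraicClosure K)) ≠ 0 :=
    (Polynomial.map_ne_zero_iff (algebraMap K (AlgebraicClosure K)).injective).2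
      (RatFunc.num_ne_zero hφ)
  have h2 : φ.denom.map (algebraMap K (AlgebraicClosure K)) ≠ 0 :=
    (Polynomial.map_ne_zero_iff (algebraMap K (AlgebraicClosure K)).injective).2
      (RatFunc.denom_ne_zero φ)
  obtain ⟨k, c, m, d, N, hm, hd, H⟩ := Lin.all (v := v) (β := β) hu hg h1
  obtain ⟨k', c', m', d', N', hm', hd', H'⟩ := Lin.all (v := v) (β := β) hu hg h2
  refine ⟨(k : ℤ) - k', c - c', m * m', d ^ m' * (d' ^ m)⁻¹, max N N',
    Nat.mul_pos hm hm', ?_, ?_⟩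
  · rw [val_mul v (val_pow v hd _) (val_inv v (val_pow v hd' _))]
    congr 1; push_cast; ring
  · intro x r hx hr hM
    rw [AddValuation.map_sub_swap] at hx
    have h1 := H _ r hx ((hg.monotone (le_max_left N N')).trans_lt hr) hM
    have h2 := H' _ r hx ((hg.monotone (le_max_right N N')).trans_lt hr) hM
    rw [eval_map_algebraMap, aeval_algebraMap_apply, hu] at h1 h2
    rw [RatFunc.eval, div_eq_mul_inv]
    refine (val_mul v h1 (val_inv v h2)).trans ?_
    congr 1; push_cast; ring

theorem ev_ne {t : ℕ → K} (ht : Function.Injective t) {p : Polynomial K} (hp : p ≠ 0) :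
    ∀ᶠ n in atTop, p.eval₂ (RingHom.id K) (t n) ≠ 0 := by
  have hfin : {n | p.eval (t n) = 0}.Finite := by
    have : {x | p.IsRoot x}.Finite := p.finite_setOfPred_isRoot hp
    exact this.preimage ht.injOn
  have := hfin.compl_mem_cofinite
  rw [Nat.cofinite_eq_atTop] at this
  exact this

theorem ev_mul {t : ℕ → K} (ht : Function.Injective t) (φ ψ : RatFunc K) :
    ∀ᶠ n in atTop, RatFunc.eval (RingHom.id K) (t n) (φ * ψ) =
      RatFunc.eval (RingHom.id K) (t n) φ * RatFunc.eval (RingHom.id K) (t n) ψ := by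
  filter_upwards [ev_ne ht φ.denom_ne_zero, ev_ne ht ψ.denom_ne_zero] with n h1 h2
  exact RatFunc.eval_mul _ _ h1 h2

theorem ev_pow {t : ℕ → K} (ht : Function.Injective t) (φ : RatFunc K) (j : ℕ) :
    ∀ᶠ n in atTop, RatFunc.eval (RingHom.id K) (t n) (φ ^ j) =
      RatFunc.eval (RingHom.id K) (t n) φ ^ j := by
  induction j with
  | zero => simp
  | succ j ih =>
    filter_upwards [ih, ev_mul ht (φ ^ j) φ] with n h1 h2
    rw [pow_succ, h2, h1, pow_succ]

theorem ev_inv_s11 {t : ℕ → K} (ht : Function.Injective t) {φ : RatFunc K} (hφ : φ ≠ 0) :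
    ∀ᶠ n in atTop, RatFunc.eval (RingHom.id K) (t n) φ⁻¹ =
      (RatFunc.eval (RingHom.id K) (t n) φ)⁻¹ := by
  filter_upwards [ev_mul ht φ φ⁻¹] with n h
  rw [mul_inv_cancel₀ hφ, RatFunc.eval_one] at h
  exact eq_inv_of_mul_eq_one_right h.symm

/-- Real gauge of a sequence with pseudo-limit `β`. -/
theorem gauge {u : AddValuation (AlgebraicClosure K) (WithTop ℝ)} {β : AlgebraicClosure K}
    {s : ℕ → K} (hs : IsPCLimitAC u s β) :
    ∃ g : ℕ → ℝ, StrictMono g ∧ Function.Injective s ∧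
      ∀ n, u (β - algebraMap K (AlgebraicClosure K) (s n)) = (g n : WithTop ℝ) := by
  have : ∀ n, ∃ r : ℝ, u (β - algebraMap K (AlgebraicClosure K) (s n)) = (r : WithTop ℝ) := by
    intro n
    obtain ⟨r, hr⟩ := WithTop.ne_top_iff_exists.1 (hs n).ne_top
    exact ⟨r, hr.symm⟩
  choose g hg using this
  have hmono : StrictMono g := by
    apply strictMono_nat_of_lt_succ
    intro n
    have := hs n
    rw [hg, hg] at this
    exact_mod_cast this
  refine ⟨g, hmono, ?_, hg⟩
  intro a b hab
  apply hmono.injective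
  have h1 := hg a
  rw [hab, hg b] at h1
  exact_mod_cast h1.symm

theorem key_lemma (v : AddValuation K (WithTop ℝ)) (hv : IsRankOne v)
    (u : AddValuation (AlgebraicClosure K) (WithTop ℝ))
    (hu : ∀ x : K, u (algebraMap K (AlgebraicClosure K) x) = v x)
    (β : AlgebraicClosure K) (φ : RatFunc K) (W : ValuationSubring (RatFunc K))
    (hW : W ∈ VVβ v u β) (hφ : φ ∉ W) :
    ∃ ψ₁ ψ₂ : RatFunc K, ψ₁ ∈ W ∧ ψ₂ ∈ W ∧ ∀ W' ∈ VVβ v u β, ψ₁ ∈ W' → ψ₂ ∈ W' → φ ∉ W' := by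
  obtain ⟨s, -, hs, hWs⟩ := hW
  have memW : ∀ ψ, ψ ∈ W ↔ ∀ᶠ n in atTop, 0 ≤ v (RatFunc.eval (RingHom.id K) (s n) ψ) := by
    intro ψ
    rw [← SetLike.mem_coe, hWs]; rfl
  obtain ⟨g, hg, hsinj, hsg⟩ := gauge hs
  have hφ0 : φ ≠ 0 := by rintro rfl; exact hφ W.zero_mem
  obtain ⟨k, c, m, d, N, hm, hd, H⟩ := ratLin (v := v) (β := β) hu hg hφ0
  have Hs : ∀ n > N, v (RatFunc.eval (RingHom.id K) (s n) φ) = ((c + k * g n : ℝ) : WithTop ℝ) :=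
    fun n hn => H (s n) (g n) (hsg n) (hg hn) ⟨n + 1, hg (Nat.lt_succ_self n)⟩
  have hfreq : ∃ᶠ n in atTop, c + k * g n < 0 := by
    rw [memW, not_eventually] at hφ
    refine (hφ.and_eventually (eventually_gt_atTop N)).mono ?_
    rintro n ⟨h1, h2⟩
    rw [Hs n h2, not_le] at h1
    exact_mod_cast h1
  -- an element of positive value
  obtain ⟨e, re, hre, he⟩ : ∃ (e : K) (r : ℝ), 0 < r ∧ v e = (r : WithTop ℝ) := by
    obtain ⟨x, hx0, hxt⟩ := hv
    obtain ⟨r, hr⟩ := WithTop.ne_top_iff_exists.1 hxt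
    have hr0 : r ≠ 0 := by
      rintro rfl; exact hx0 hr.symm
    rcases lt_or_gt_of_ne hr0 with h | h
    · exact ⟨x⁻¹, -r, by linarith, val_inv v hr.symm⟩
    · exact ⟨x, r, h, hr.symm⟩
  by_cases hA : ∃ ε > 0, ∀ᶠ n in atTop, c + k * g n ≤ -ε
  · obtain ⟨ε, hε, hA⟩ := hA
    obtain ⟨j, hj⟩ := exists_nat_gt (re / ε)
    have hj' : re < j * ε := by rwa [div_lt_iff₀ hε] at hj
    have he0 : e ≠ 0 := nz_of_real v he
    have hCe : (RatFunc.C e : RatFunc K) ≠ 0 := by simpa using he0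
    refine ⟨1, (RatFunc.C e * φ ^ j)⁻¹, W.one_mem, ?_, ?_⟩
    · refine (W.mem_or_inv_mem _).resolve_left ?_
      rw [memW]
      intro hcon
      obtain ⟨n, h1, h2, h3, h4, h5⟩ := (hcon.and <| (ev_mul hsinj (RatFunc.C e) (φ ^ j)).and <|
        (ev_pow hsinj φ j).and <| (eventually_gt_atTop N).and hA).exists
      rw [h2, h3, RatFunc.eval_C, RingHom.id_apply,
        val_mul v he (val_pow v (Hs n h4) j)] at h1
      have h1' : 0 ≤ re + j * (c + k * g n) := by exact_mod_cast h1
      have : (j : ℝ) * (c + k * g n) ≤ j * (-ε) := by gcongr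
      linarith
    · rintro W' ⟨t, -, ht, hWt⟩ - hψ hcon
      have h1 : (RatFunc.C e)⁻¹ ∈ W' := by
        have := W'.mul_mem _ _ hψ (pow_mem hcon j)
        rwa [mul_inv, mul_assoc, inv_mul_cancel₀ (pow_ne_zero _ hφ0), mul_one] at this
      rw [← map_inv₀, ← SetLike.mem_coe, hWt] at h1
      obtain ⟨n, h1⟩ := Eventually.exists h1
      rw [RatFunc.eval_C, RingHom.id_apply, val_inv v he] at h1
      have : (0 : ℝ) ≤ -re := by exact_mod_cast h1
      linarith
  · push Not at hA
    have hk : 0 < k := by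
      by_contra hk
      push Not at hk
      obtain ⟨n0, hn0⟩ := hfreq.exists
      obtain ⟨n, hlt, hn⟩ := ((hA (-(c + k * g n0)) (by linarith)).and_eventually
        (eventually_ge_atTop n0)).exists
      have h1 : g n0 ≤ g n := hg.monotone hn
      have h2 : (k : ℝ) ≤ 0 := by exact_mod_cast hk
      nlinarith
    have hkR : (0 : ℝ) < k := by exact_mod_cast hk
    set δ : ℝ := -c / k with hδ
    have hcδ : c = -(k * δ) := by rw [hδ]; field_simp
    have hgδ : ∀ n, g n < δ := by
      intro n
      obtain ⟨n', h1, h2⟩ := (hfreq.and_eventually (eventually_ge_atTop n)).exists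
      have h3 : g n ≤ g n' := hg.monotone h2
      rw [hcδ] at h1
      have : k * (g n' - δ) < 0 := by linarith
      have := neg_of_mul_neg_right this hkR.le
      linarith
    have hsup : ∀ r < δ, ∃ M, r < g M := by
      intro r hr
      obtain ⟨n, hn⟩ := (hA (k * (δ - r)) (mul_pos hkR (by linarith))).exists
      refine ⟨n, ?_⟩
      rw [hcδ] at hn
      have : 0 < k * (g n - r) := by linarith
      have := pos_of_mul_pos_right this hkR.le
      linarith
    -- `j δ = v (d⁻¹)`
    obtain ⟨kn, rfl⟩ := Int.eq_ofNat_of_zero_le hk.le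
    have hkn : 0 < kn := by exact_mod_cast hk
    -- lower bound
    have hsd : v (s (N + 1) - s N) = (g N : WithTop ℝ) := by
      rw [← hu, map_sub, AddValuation.map_sub_swap, ← hsg N, AddValuation.map_sub_swap u β]
      apply usub_eq
      rw [AddValuation.map_sub_swap, hsg, hsg]
      exact_mod_cast hg (Nat.lt_succ_self N)
    set p₁ : Polynomial K := C (s (N + 1) - s N)⁻¹ * (X - C (s (N + 1))) with hp₁
    have hev₁ : ∀ x, RatFunc.eval (RingHom.id K) x (algebraMap K[X] (RatFunc K) p₁) =
        (s (N + 1) - s N)⁻¹ * (x - s (N + 1)) := by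
      intro x
      rw [RatFunc.eval_algebraMap]
      simp [hp₁]
    have hp₁W : algebraMap K[X] (RatFunc K) p₁ ∈ W := by
      rw [memW]
      filter_upwards [eventually_gt_atTop (N + 1)] with n hn
      have : v (s n - s (N + 1)) = (g (N + 1) : WithTop ℝ) := by
        rw [← hu, map_sub, AddValuation.map_sub_swap, ← hsg (N + 1), AddValuation.map_sub_swap u β]
        apply usub_eq
        rw [AddValuation.map_sub_swap, hsg, hsg]
        exact_mod_cast hg hn
      rw [hev₁, val_mul v (val_inv v hsd) this]
      have := hg (Nat.lt_succ_self N)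
      have h2 : (0 : ℝ) ≤ -g N + g (N + 1) := by linarith
      exact_mod_cast h2
    have lower : ∀ (t : ℕ → K) (η : ℕ → ℝ), StrictMono η →
        (∀ n, u (β - algebraMap K (AlgebraicClosure K) (t n)) = (η n : WithTop ℝ)) →
        (∀ᶠ n in atTop, 0 ≤ v (RatFunc.eval (RingHom.id K) (t n)
          (algebraMap K[X] (RatFunc K) p₁))) → ∀ᶠ n in atTop, g N < η n := by
      intro t η hη htη h
      obtain ⟨n0, hn0⟩ := h.exists
      have hle : g N ≤ η n0 := by
        rw [hev₁] at hn0
        have hh : (g N : WithTop ℝ) ≤ u (β - algebraMap K (AlgebraicClosure K) (t n0)) := by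
          apply usub_le u (b := algebraMap K (AlgebraicClosure K) (s (N + 1)))
          · rw [hsg]; exact_mod_cast (hg (Nat.lt_succ_self N)).le
          · rw [AddValuation.map_sub_swap, ← map_sub, hu]
            by_cases h0 : t n0 - s (N + 1) = 0
            · rw [h0, AddValuation.map_zero]; exact le_top
            · obtain ⟨r, hr⟩ := exists_real_s11 v h0
              rw [val_mul v (val_inv v hsd) hr] at hn0
              have h2 : (0 : ℝ) ≤ -g N + r := by exact_mod_cast hn0
              rw [hr]
              have : g N ≤ r := by linarith
              exact_mod_cast this
        rw [htη] at hh
        exact_mod_cast hh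
      filter_upwards [eventually_gt_atTop n0] with n hn
      exact hle.trans_lt (hη hn)
    -- conclusion from bounds
    have final : ∀ (t : ℕ → K) (η : ℕ → ℝ),
        (∀ n, u (β - algebraMap K (AlgebraicClosure K) (t n)) = (η n : WithTop ℝ)) →
        (∀ᶠ n in atTop, g N < η n) → (∀ᶠ n in atTop, η n < δ) →
        ¬ ∀ᶠ n in atTop, 0 ≤ v (RatFunc.eval (RingHom.id K) (t n) φ) := by
      intro t η htη h1 h2 h3
      obtain ⟨n, h1, h2, h3⟩ := (h1.and (h2.and h3)).exists
      rw [H (t n) (η n) (htη n) h1 (hsup _ h2)] at h3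
      have h3' : (0 : ℝ) ≤ c + ((kn : ℤ) : ℝ) * η n := by exact_mod_cast h3
      rw [hcδ] at h3'
      have := mul_lt_mul_of_pos_left h2 hkR
      linarith
    by_cases hB : ∃ t : K, (δ : WithTop ℝ) < u (β - algebraMap K (AlgebraicClosure K) t)
    · obtain ⟨t0, ht0⟩ := hB
      set p₂ : Polynomial K := C d * (X - C t0) ^ (m * kn) with hp₂
      have hd0 : d ≠ 0 := nz_of_real v hd
      have hp₂0 : algebraMap K[X] (RatFunc K) p₂ ≠ 0 := by
        apply RatFunc.algebraMap_ne_zero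
        exact mul_ne_zero (C_ne_zero.2 hd0) (pow_ne_zero _ (X_sub_C_ne_zero _))
      have hev₂ : ∀ x r, v (x - t0) = ((r : ℝ) : WithTop ℝ) →
          v (RatFunc.eval (RingHom.id K) x (algebraMap K[X] (RatFunc K) p₂)) =
          ((m * kn * (r - δ) : ℝ) : WithTop ℝ) := by
        intro x r hx
        rw [RatFunc.eval_algebraMap]
        have : eval₂ (RingHom.id K) x (algebraMap K[X] K[X] p₂) = d * (x - t0) ^ (m * kn) := by
          simp [hp₂]
        rw [this, val_mul v hd (val_pow v hx _), hcδ]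
        congr 1; push_cast; ring
      refine ⟨_, (algebraMap K[X] (RatFunc K) p₂)⁻¹, hp₁W, ?_, ?_⟩
      · rw [memW]
        filter_upwards [ev_inv_s11 hsinj hp₂0] with n hn
        have h1 : v (s n - t0) = (g n : WithTop ℝ) := by
          rw [← hu, map_sub, ← hsg n, AddValuation.map_sub_swap u β]
          apply usub_eq
          rw [AddValuation.map_sub_swap, hsg]
          exact lt_trans (by exact_mod_cast hgδ n) ht0
        rw [hn, val_inv v (hev₂ _ _ h1)]
        have h2 := hgδ n
        have h3 : (0 : ℝ) ≤ (m * kn) * (δ - g n) :=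
          mul_nonneg (by positivity) (by linarith)
        have h4 : (0 : ℝ) ≤ -(m * kn * (g n - δ)) := by linarith
        exact_mod_cast h4
      · rintro W' ⟨t, -, ht, hWt⟩ hψ₁ hψ₂ hcon
        rw [← SetLike.mem_coe, hWt] at hψ₁ hψ₂ hcon
        obtain ⟨η, hη, htinj, htη⟩ := gauge ht
        refine final t η htη (lower t η hη htη hψ₁) ?_ hcon
        have hle : ∀ᶠ n in atTop, η n ≤ δ := by
          filter_upwards [hψ₂, ev_inv_s11 htinj hp₂0, ev_ne htinj (X_sub_C_ne_zero t0)] with n h1 h2 h3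
          have h3' : t n - t0 ≠ 0 := by simpa using h3
          obtain ⟨r, hr⟩ := exists_real_s11 v h3'
          rw [h2, val_inv v (hev₂ _ _ hr)] at h1
          have h4 : (0 : ℝ) ≤ -(m * kn * (r - δ)) := by exact_mod_cast h1
          have hmk : (0 : ℝ) < m * kn := by positivity
          have hrδ : r ≤ δ := by
            by_contra hc
            push Not at hc
            have := mul_pos hmk (sub_pos.2 hc)
            linarith
          by_contra hc
          push Not at hc
          have h5 : (δ : WithTop ℝ) < u (algebraMap K (AlgebraicClosure K) (t n) -
              algebraMap K (AlgebraicClosure K) t0) := by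
            apply usub_lt u (b := β) _ ht0
            rw [AddValuation.map_sub_swap, htη]
            exact_mod_cast hc
          rw [← map_sub, hu, hr] at h5
          have : δ < r := by exact_mod_cast h5
          linarith
        obtain ⟨n0, hn0⟩ := eventually_atTop.1 hle
        filter_upwards [eventually_ge_atTop n0] with n hn
        exact (hη (Nat.lt_succ_self n)).trans_le (hn0 (n + 1) (by omega))
    · push Not at hB
      refine ⟨_, 1, hp₁W, W.one_mem, ?_⟩
      rintro W' ⟨t, -, ht, hWt⟩ hψ₁ - hcon
      rw [← SetLike.mem_coe, hWt] at hψ₁ hcon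
      obtain ⟨η, hη, htinj, htη⟩ := gauge ht
      refine final t η htη (lower t η hη htη hψ₁) (Eventually.of_forall fun n => ?_) hcon
      have := hB (t (n + 1))
      rw [htη] at this
      have h2 : η (n + 1) ≤ δ := by exact_mod_cast this
      exact (hη (Nat.lt_succ_self n)).trans_le h2

theorem topo {L : Type*} [Field L] (S : Set (ValuationSubring L))
    (h : ∀ (φ : L), ∀ W ∈ S, φ ∉ W →
      ∃ ψ₁ ψ₂ : L, ψ₁ ∈ W ∧ ψ₂ ∈ W ∧ ∀ W' ∈ S, ψ₁ ∈ W' → ψ₂ ∈ W' → φ ∉ W') :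
    zarSub S = consSub S := by
  have hB : ∀ φ : L, IsOpen[zarSub S] {W : S | φ ∈ W.1} := by
    intro φ
    exact (@isOpen_induced_iff _ _ (zarTop L) _ _).2 ⟨_, isOpen_generateFrom_of_mem ⟨φ, rfl⟩, rfl⟩
  have hBc : ∀ φ : L, IsOpen[zarSub S] {W : S | φ ∉ W.1} := by
    intro φ
    letI := zarSub S
    rw [isOpen_iff_forall_mem_open]
    intro W hW
    obtain ⟨ψ₁, ψ₂, h1, h2, h3⟩ := h φ W.1 W.2 hW
    exact ⟨{W : S | ψ₁ ∈ W.1} ∩ {W : S | ψ₂ ∈ W.1}, fun W' hW' => h3 W'.1 W'.2 hW'.1 hW'.2,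
      (hB ψ₁).inter (hB ψ₂), h1, h2⟩
  apply le_antisymm
  · unfold consSub consTop
    rw [induced_generateFrom_eq]
    apply le_generateFrom
    letI := zarSub S
    rintro _ ⟨U, ⟨T, rfl | rfl⟩, rfl⟩
    · have : (Subtype.val ⁻¹' {W : ValuationSubring L | ∀ φ ∈ T, φ ∈ W} : Set S) =
          ⋂ φ ∈ T, {W : S | φ ∈ W.1} := by ext; simp
      rw [this]
      exact isOpen_biInter_finset fun φ _ => hB φ
    · have : (Subtype.val ⁻¹' {W : ValuationSubring L | ∀ φ ∈ T, φ ∈ W}ᶜ : Set S) =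
          ⋃ φ ∈ T, {W : S | φ ∉ W.1} := by ext; simp
      rw [this]
      exact isOpen_biUnion fun φ _ => hBc φ
  · unfold zarSub zarTop
    rw [induced_generateFrom_eq]
    apply le_generateFrom
    rintro _ ⟨U, ⟨φ, rfl⟩, rfl⟩
    refine (@isOpen_induced_iff _ _ (consTop L) _ _).2 ⟨_, isOpen_generateFrom_of_mem ⟨{φ}, Or.inl rfl⟩, ?_⟩
    ext; simp

/-- The Zariski and constructible topologies agree on `𝒱(β,•)`. -/
theorem statement11 (v : AddValuation K (WithTop ℝ)) (hv : IsRankOne v)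
    (u : AddValuation (AlgebraicClosure K) (WithTop ℝ))
    (hu : ∀ x : K, u (algebraMap K (AlgebraicClosure K) x) = v x)
    (β : AlgebraicClosure K) :
    zarSub (VVβ v u β) = consSub (VVβ v u β) := by
  exact topo _ fun φ W hW hφ => key_lemma v hv u hu β φ W hW hφ

end PaperPCZar
end
end
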